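/- arXiv:2011.04274 — 2 statements merged into one kernel-verified Lean document; each statement's English description precedes it below -/
import Mathlib

section
/- Let 𝒳 be a Polish space, d ∈ ℕ, r ∈ [1,∞), μ ∈ 𝒫_r(𝒳), ν ∈ 𝒫_r(ℝ^d), and let C : 𝒳 × 𝒫_r(ℝ^d) → ℝ̄ be measurable and barycentric (i.e. C(x,p) = C(x,q) whenever b(p) = b(q)) such that ∫ C(x,p) P(dx,dp) is well-defined for every P ∈ Λ(μ,ν). Then inf_{P ∈ Λ(μ,ν)} ∫ C(x,p) P(dx,dp) = inf_{ν' ≤_c ν} inf_{π ∈ Π(μ,ν')} ∫ C(x,δ_y) π(dx,dy), where the outer infimum runs over all ν' ∈ 𝒫_r(ℝ^d) dominated by ν in convex order. -/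
open MeasureTheory Set Filter
open scoped ENNReal NNReal Topology RealInnerProductSpace

noncomputable section

namespace WOT

/-- The set of couplings of `μ` and `ν`. -/
def Couplings {X Y : Type*} [MeasurableSpace X] [MeasurableSpace Y]
    (μ : Measure X) (ν : Measure Y) : Set (Measure (X × Y)) :=
  {π | π.map Prod.fst = μ ∧ π.map Prod.snd = ν}

/-- `K` is a disintegration of `π` with respect to its first marginal `μ`. -/
def IsDisint {X Y : Type*} [MeasurableSpace X] [MeasurableSpace Y]
    (π : Measure (X × Y)) (μ : Measure X) (K : X → Measure Y) : Prop :=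
  Measurable K ∧ (∀ x, IsProbabilityMeasure (K x)) ∧
    ∀ s : Set (X × Y), MeasurableSet s → π s = ∫⁻ x, K x (Prod.mk x ⁻¹' s) ∂μ

/-- The intensity `I(Q)` of a measure on measures. -/
def intensity {Y : Type*} [MeasurableSpace Y] (Q : Measure (Measure Y)) : Measure Y :=
  Q.join

/-- The intensity map `Î`. -/
def intensityHat {X Y : Type*} [MeasurableSpace X] [MeasurableSpace Y]
    (P : Measure (X × Measure Y)) : Measure (X × Y) :=
  P.bind fun xp => (Measure.dirac xp.1).prod xp.2

/-- `Λ(μ,ν)`, the set of probability measures on `X × 𝒫(Y)` whose intensity is a coupling. -/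
def Lambda {X Y : Type*} [MeasurableSpace X] [MeasurableSpace Y]
    (μ : Measure X) (ν : Measure Y) : Set (Measure (X × Measure Y)) :=
  {P | IsProbabilityMeasure P ∧ (∀ᵐ xp ∂P, IsProbabilityMeasure xp.2) ∧
    intensityHat P ∈ Couplings μ ν}

/-- Finite `r`-th moment. -/
def FinMom {X : Type*} [MeasurableSpace X] [PseudoMetricSpace X]
    (r : ℝ) (x₀ : X) (μ : Measure X) : Prop :=
  ∫⁻ x, ENNReal.ofReal (dist x x₀ ^ r) ∂μ < ⊤

/-- The growth class `Φ_r`. -/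
def PhiR {X : Type*} [PseudoMetricSpace X] (r : ℝ) (x₀ : X) : Set (X → ℝ) :=
  {φ | Continuous φ ∧ ∃ K : ℝ, ∀ x, |φ x| ≤ K * (1 + dist x x₀ ^ r)}

/-- The `r`-Wasserstein distance (valued in `ℝ≥0∞`). -/
def Wr {Y : Type*} [MeasurableSpace Y] [PseudoMetricSpace Y]
    (r : ℝ) (p q : Measure Y) : ℝ≥0∞ :=
  ⨅ π ∈ Couplings p q, (∫⁻ z : Y × Y, ENNReal.ofReal (dist z.1 z.2 ^ r) ∂π) ^ (1 / r)

/-- `𝒫_r(Y)`: probability measures with finite `r`-th moment. -/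
def Pr {Y : Type*} [MeasurableSpace Y] [PseudoMetricSpace Y] (r : ℝ) (y₀ : Y) :
    Set (Measure Y) :=
  {p | IsProbabilityMeasure p ∧ FinMom r y₀ p}

/-- `𝒫_r(𝒫_r(Y))`: probability measures on `𝒫_r(Y)` with finite `r`-th moment w.r.t. `𝒲_r`. -/
def PrP {Y : Type*} [MeasurableSpace Y] [PseudoMetricSpace Y] (r : ℝ) (y₀ : Y) :
    Set (Measure (Measure Y)) :=
  {Q | IsProbabilityMeasure Q ∧ (∀ᵐ p ∂Q, p ∈ Pr r y₀) ∧
    ∫⁻ p, Wr r p (Measure.dirac y₀) ^ r ∂Q < ⊤}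

/-- The positive part of an extended real, valued in `ℝ≥0∞`. -/
def epos (e : EReal) : ℝ≥0∞ := if e = ⊤ then ⊤ else ENNReal.ofReal e.toReal

/-- Extended-real integral: positive part minus negative part (with value `⊥` when
both parts are infinite, i.e. when the integral is not well-defined). -/
def eInt {X : Type*} [MeasurableSpace X] (f : X → EReal) (μ : Measure X) : EReal :=
  ((∫⁻ x, epos (f x) ∂μ : ℝ≥0∞) : EReal) - ((∫⁻ x, epos (-(f x)) ∂μ : ℝ≥0∞) : EReal)

/-- Extended-real integral with the opposite (`⊤`) convention for ill-defined integrals. -/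
def eIntU {X : Type*} [MeasurableSpace X] (f : X → EReal) (μ : Measure X) : EReal :=
  -eInt (fun x => -(f x)) μ

/-- The extended-real integral is well-defined. -/
def eIntWellDef {X : Type*} [MeasurableSpace X] (f : X → EReal) (μ : Measure X) : Prop :=
  (∫⁻ x, epos (f x) ∂μ ≠ ⊤) ∨ (∫⁻ x, epos (-(f x)) ∂μ ≠ ⊤)

/-- Convergence in the `r`-Wasserstein distance. -/
def WrTendsto {Y : Type*} [MeasurableSpace Y] [PseudoMetricSpace Y]
    (r : ℝ) (ps : ℕ → Measure Y) (p : Measure Y) : Prop :=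
  Tendsto (fun n => Wr r (ps n) p) atTop (nhds 0)

/-- (Sequential) lower semicontinuity on `𝒫_r(Y)` w.r.t. `𝒲_r`. -/
def LscWr1 {Y : Type*} [MeasurableSpace Y] [PseudoMetricSpace Y]
    (r : ℝ) (y₀ : Y) (G : Measure Y → EReal) : Prop :=
  ∀ (p : Measure Y) (ps : ℕ → Measure Y), p ∈ Pr r y₀ → (∀ n, ps n ∈ Pr r y₀) →
    WrTendsto r ps p → G p ≤ liminf (fun n => G (ps n)) atTop

/-- (Sequential) upper semicontinuity on `𝒫_r(Y)` w.r.t. `𝒲_r`. -/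
def UscWr1 {Y : Type*} [MeasurableSpace Y] [PseudoMetricSpace Y]
    (r : ℝ) (y₀ : Y) (G : Measure Y → EReal) : Prop :=
  ∀ (p : Measure Y) (ps : ℕ → Measure Y), p ∈ Pr r y₀ → (∀ n, ps n ∈ Pr r y₀) →
    WrTendsto r ps p → limsup (fun n => G (ps n)) atTop ≤ G p

/-- (Sequential) lower semicontinuity on `X × 𝒫_r(Y)` w.r.t. `d_X × 𝒲_r`. -/
def LscWr {X Y : Type*} [TopologicalSpace X] [MeasurableSpace Y] [PseudoMetricSpace Y]
    (r : ℝ) (y₀ : Y) (C : X × Measure Y → EReal) : Prop :=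
  ∀ (x : X) (xs : ℕ → X) (p : Measure Y) (ps : ℕ → Measure Y),
    p ∈ Pr r y₀ → (∀ n, ps n ∈ Pr r y₀) → Tendsto xs atTop (nhds x) → WrTendsto r ps p →
    C (x, p) ≤ liminf (fun n => C (xs n, ps n)) atTop

/-- (Sequential) continuity of a real-valued cost on `X × 𝒫_r(Y)` w.r.t. `d_X × 𝒲_r`. -/
def ContWr {X Y : Type*} [TopologicalSpace X] [MeasurableSpace Y] [PseudoMetricSpace Y]
    (r : ℝ) (y₀ : Y) (C : X × Measure Y → ℝ) : Prop :=
  ∀ (x : X) (xs : ℕ → X) (p : Measure Y) (ps : ℕ → Measure Y),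
    p ∈ Pr r y₀ → (∀ n, ps n ∈ Pr r y₀) → Tendsto xs atTop (nhds x) → WrTendsto r ps p →
    Tendsto (fun n => C (xs n, ps n)) atTop (nhds (C (x, p)))

/-- Convexity of an extended-real-valued function on a set of measures. -/
def EConvexOn {Y : Type*} [MeasurableSpace Y] (S : Set (Measure Y)) (G : Measure Y → EReal) :
    Prop :=
  ∀ p ∈ S, ∀ q ∈ S, ∀ t : ℝ≥0, t ≤ 1 →
    G ((t : ℝ≥0∞) • p + ((1 - t : ℝ≥0) : ℝ≥0∞) • q)
      ≤ ((t : ℝ) : EReal) * G p + (((1 - t : ℝ≥0) : ℝ) : EReal) * G q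

/-- The lower semicontinuous convex envelope (on `𝒫_r(Y)` w.r.t. `𝒲_r`). -/
def cvxEnvWr {Y : Type*} [MeasurableSpace Y] [PseudoMetricSpace Y]
    (r : ℝ) (y₀ : Y) (f : Measure Y → EReal) : Measure Y → EReal :=
  fun p => ⨆ G ∈ {G : Measure Y → EReal |
    LscWr1 r y₀ G ∧ EConvexOn (Pr r y₀) G ∧ ∀ q ∈ Pr r y₀, G q ≤ f q}, G p

/-- The cost `C̃(x,p) = inf {∫ C(x,q) Q(dq) : Q ∈ 𝒫_r(𝒫_r(Y)), I(Q) = p}`. -/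
def tildeC {X Y : Type*} [MeasurableSpace X] [MeasurableSpace Y] [PseudoMetricSpace Y]
    (r : ℝ) (y₀ : Y) (C : X × Measure Y → EReal) : X × Measure Y → EReal :=
  fun xp => ⨅ Q ∈ {Q | Q ∈ PrP r y₀ ∧ intensity Q = xp.2}, eInt (fun q => C (xp.1, q)) Q

/-- The barycenter of a measure on a normed space. -/
def bary {E : Type*} [NormedAddCommGroup E] [NormedSpace ℝ E] [MeasurableSpace E]
    (p : Measure E) : E :=
  ∫ y, y ∂p

/-- Convex order of measures. -/
def ConvexOrder {E : Type*} [NormedAddCommGroup E] [NormedSpace ℝ E] [MeasurableSpace E]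
    (ν' ν : Measure E) : Prop :=
  ∀ θ : E → ℝ, ConvexOn ℝ Set.univ θ →
    eInt (fun y => ((θ y : ℝ) : EReal)) ν' ≤ eInt (fun y => ((θ y : ℝ) : EReal)) ν

/-- The inf-convolution `R_C ψ`. -/
def RC {X Y : Type*} [MeasurableSpace Y] [PseudoMetricSpace Y]
    (r : ℝ) (y₀ : Y) (C : X × Measure Y → EReal) (ψ : Y → ℝ) : X → EReal :=
  fun x => ⨅ p ∈ Pr r y₀, (((-∫ y, ψ y ∂p : ℝ) : EReal) + C (x, p))

/-- `κ` is a regular conditional distribution of `Yv` given the sub-σ-algebra `m1`. -/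
def IsRCD {Ω Y : Type*} [MeasurableSpace Y] (m1 : MeasurableSpace Ω)
    (mΩ : MeasurableSpace Ω) (P : @Measure Ω mΩ) (Yv : Ω → Y) (κ : Ω → Measure Y) : Prop :=
  (∀ ω, IsProbabilityMeasure (κ ω)) ∧ Measurable[m1] κ ∧
    ∀ A : Set Y, MeasurableSet A → ∀ B : Set Ω, MeasurableSet[m1] B →
      P (B ∩ Yv ⁻¹' A) = ∫⁻ ω in B, κ ω A ∂P

end WOT

namespace WOT

set_option linter.unusedSectionVars false

open scoped BoundedContinuousFunction

/-- Continuous functions of linear growth. -/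
def LG (F : Type*) [NormedAddCommGroup F] : Submodule ℝ (F → ℝ) where
  carrier := {g | Continuous g ∧ ∃ K : ℝ, ∀ y, |g y| ≤ K * (1 + ‖y‖)}
  zero_mem' := ⟨continuous_const, 0, fun y => by simp⟩
  add_mem' := by
    rintro f g ⟨hf, K, hK⟩ ⟨hg, K', hK'⟩
    refine ⟨hf.add hg, K + K', fun y => ?_⟩
    calc |f y + g y| ≤ |f y| + |g y| := abs_add_le _ _
      _ ≤ _ := by nlinarith [hK y, hK' y]
  smul_mem' := by
    rintro c f ⟨hf, K, hK⟩
    refine ⟨hf.const_smul c, |c| * K, fun y => ?_⟩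
    simp only [Pi.smul_apply, smul_eq_mul, abs_mul, mul_assoc]
    exact mul_le_mul_of_nonneg_left (hK y) (abs_nonneg c)

section Strassen

variable {E : Type*} [NormedAddCommGroup E] [InnerProductSpace ℝ E] [FiniteDimensional ℝ E]
  [MeasurableSpace E] [BorelSpace E]

lemma LG.integrable {F : Type*} [NormedAddCommGroup F] [MeasurableSpace F] [BorelSpace F]
    [SecondCountableTopology F]
    {g : F → ℝ} (hg : g ∈ LG F) {ν : Measure F} [IsFiniteMeasure ν]
    (hν : Integrable (fun y : F => ‖y‖) ν) : Integrable g ν := by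
  obtain ⟨hc, K, hK⟩ := hg
  refine Integrable.mono' (g := fun y => K * (1 + ‖y‖)) ?_ hc.aestronglyMeasurable
    (Eventually.of_forall fun y => by simpa using hK y)
  exact (Integrable.add (integrable_const 1) hν).const_mul K

lemma norm_mem_LG {F : Type*} [NormedAddCommGroup F] : (fun y : F => 1 + ‖y‖) ∈ LG F :=
  ⟨by fun_prop, 1, fun y => by rw [abs_of_nonneg (by positivity)]; simp⟩

lemma const_bound {F : Type*} [NormedAddCommGroup F] {g : F → ℝ} {K : ℝ}
    (h : ∀ y, |g y| ≤ K * (1 + ‖y‖)) : 0 ≤ K := by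
  have := (abs_nonneg _).trans (h 0)
  simpa using this

/-- The map `(g, f, φ) ↦ g(y) + f(z) + ⟪φ(y), z - y⟫`. -/
def Tmap (E : Type*) [NormedAddCommGroup E] [InnerProductSpace ℝ E] :
    (LG E × LG E × (E →ᵇ E)) →ₗ[ℝ] LG (E × E) where
  toFun a := ⟨fun p => a.1.1 p.1 + a.2.1.1 p.2 + ⟪a.2.2 p.1, p.2 - p.1⟫, by
    obtain ⟨⟨g, hg, K, hK⟩, ⟨f, hf, K', hK'⟩, φ⟩ := a
    have h0 := const_bound hK
    have h0' := const_bound hK'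
    refine ⟨?_, K + K' + ‖φ‖ * 2, fun p => ?_⟩
    · dsimp
      have := φ.continuous
      fun_prop
    · have h1 : ‖p.1‖ ≤ ‖p‖ := norm_fst_le p
      have h2 : ‖p.2‖ ≤ ‖p‖ := norm_snd_le p
      have h3 : |⟪φ p.1, p.2 - p.1⟫| ≤ ‖φ‖ * (2 * (1 + ‖p‖)) := by
        refine (abs_real_inner_le_norm _ _).trans ?_
        refine mul_le_mul (φ.norm_coe_le_norm _) ?_ (norm_nonneg _) (norm_nonneg _)
        refine (norm_sub_le _ _).trans ?_
        linarith
      have h4 : |g p.1| ≤ K * (1 + ‖p‖) := (hK _).trans (by gcongr)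
      have h5 : |f p.2| ≤ K' * (1 + ‖p‖) := (hK' _).trans (by gcongr)
      calc |g p.1 + f p.2 + ⟪φ p.1, p.2 - p.1⟫| ≤ |g p.1| + |f p.2| + |⟪φ p.1, p.2 - p.1⟫| :=
            abs_add_three _ _ _
        _ ≤ _ := by linarith⟩
  map_add' a b := by
    ext p
    simp [inner_add_left]
    ring
  map_smul' c a := by
    ext p
    simp [inner_smul_left]
    ring

lemma Tmap_apply (a : LG E × LG E × (E →ᵇ E)) (p : E × E) :
    (Tmap E a).1 p = a.1.1 p.1 + a.2.1.1 p.2 + ⟪a.2.2 p.1, p.2 - p.1⟫ := rfl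

/-- The functional `(g, f, φ) ↦ ∫ g dν' + ∫ f dν`. -/
def Lmap (ν' ν : Measure E) [IsProbabilityMeasure ν'] [IsProbabilityMeasure ν]
    (hi' : Integrable (fun y : E => ‖y‖) ν') (hi : Integrable (fun y : E => ‖y‖) ν) :
    (LG E × LG E × (E →ᵇ E)) →ₗ[ℝ] ℝ where
  toFun a := ∫ y, a.1.1 y ∂ν' + ∫ y, a.2.1.1 y ∂ν
  map_add' a b := by
    simp only [Prod.fst_add, Prod.snd_add, Submodule.coe_add, Pi.add_apply]
    rw [integral_add (LG.integrable a.1.2 hi') (LG.integrable b.1.2 hi'),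
      integral_add (LG.integrable a.2.1.2 hi) (LG.integrable b.2.1.2 hi)]
    ring
  map_smul' c a := by
    simp only [Prod.smul_fst, Prod.smul_snd, Submodule.coe_smul, Pi.smul_apply, smul_eq_mul,
      integral_const_mul, RingHom.id_apply]
    ring

lemma convex_continuous {θ : E → ℝ} (h : ConvexOn ℝ univ θ) : Continuous θ :=
  continuousOn_univ.1 (h.continuousOn isOpen_univ)

lemma Lmap_nonneg (ν' ν : Measure E) [IsProbabilityMeasure ν'] [IsProbabilityMeasure ν]
    (hi' : Integrable (fun y : E => ‖y‖) ν') (hi : Integrable (fun y : E => ‖y‖) ν)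
    (hco : ∀ θ : E → ℝ, ConvexOn ℝ univ θ → Integrable θ ν' → Integrable θ ν →
      ∫ y, θ y ∂ν' ≤ ∫ y, θ y ∂ν)
    (a : LG E × LG E × (E →ᵇ E)) (ha : ∀ p, 0 ≤ (Tmap E a).1 p) :
    0 ≤ Lmap ν' ν hi' hi a := by
  obtain ⟨⟨g, hg⟩, ⟨f, hf⟩, φ⟩ := a
  simp only [Tmap_apply] at ha
  change 0 ≤ ∫ y, g y ∂ν' + ∫ y, f y ∂ν
  let A : E → E → ℝ := fun y z => - g y - ⟪φ y, z - y⟫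
  have hA : ∀ y z, A y z ≤ f z := fun y z => by
    have := ha (y, z)
    simp only at this
    simp only [A]; linarith
  let θ : E → ℝ := fun z => ⨆ y, A y z
  have hbdd : ∀ z, BddAbove (range fun y => A y z) := fun z =>
    ⟨f z, by rintro _ ⟨y, rfl⟩; exact hA y z⟩
  have hθf : ∀ z, θ z ≤ f z := fun z => ciSup_le fun y => hA y z
  have hAθ : ∀ y z, A y z ≤ θ z := fun y z => le_ciSup (hbdd z) y
  have hgθ : ∀ z, - g z ≤ θ z := fun z => by simpa [A] using hAθ z z
  have hconv : ConvexOn ℝ univ θ := by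
    refine ⟨convex_univ, fun x _ z _ s t hs ht hst => ciSup_le fun y => ?_⟩
    have e : A y (s • x + t • z) = s • A y x + t • A y z := by
      simp only [A, smul_eq_mul, inner_sub_right, inner_add_right, inner_smul_right]
      have : t = 1 - s := by linarith
      subst this; ring
    rw [e]
    exact add_le_add (smul_le_smul_of_nonneg_left (hAθ y x) hs)
      (smul_le_smul_of_nonneg_left (hAθ y z) ht)
  have hθ : θ ∈ LG E := by
    obtain ⟨-, K, hK⟩ := hg
    obtain ⟨-, K', hK'⟩ := hf
    have h0 := const_bound hK
    have h0' := const_bound hK'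
    refine ⟨convex_continuous hconv, K + K', fun y => abs_le.2 ⟨?_, ?_⟩⟩
    · have := (abs_le.1 (hK y)).2
      have : 0 ≤ K' * (1 + ‖y‖) := by positivity
      linarith [hgθ y]
    · have := (abs_le.1 (hK' y)).2
      have : 0 ≤ K * (1 + ‖y‖) := by positivity
      linarith [hθf y]
  have h1 := hco θ hconv (LG.integrable hθ hi') (LG.integrable hθ hi)
  have h2 : ∫ y, θ y ∂ν ≤ ∫ y, f y ∂ν :=
    integral_mono (LG.integrable hθ hi) (LG.integrable hf hi) hθf
  have h3 : ∫ y, - g y ∂ν' ≤ ∫ y, θ y ∂ν' :=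
    integral_mono (LG.integrable hg hi').neg (LG.integrable hθ hi') hgθ
  rw [integral_neg] at h3
  linarith

lemma exists_section {A V : Type*} [AddCommGroup A] [Module ℝ A] [AddCommGroup V] [Module ℝ V]
    (T : A →ₗ[ℝ] V) : ∃ σ : LinearMap.range T →ₗ[ℝ] A, ∀ w, T (σ w) = w := by
  obtain ⟨σ, hσ⟩ := T.rangeRestrict.exists_rightInverse_of_surjective
    (LinearMap.range_rangeRestrict _)
  refine ⟨σ, fun w => ?_⟩
  have := LinearMap.congr_fun hσ w
  exact congrArg Subtype.val this

lemma exists_functional (ν' ν : Measure E) [IsProbabilityMeasure ν'] [IsProbabilityMeasure ν]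
    (hi' : Integrable (fun y : E => ‖y‖) ν') (hi : Integrable (fun y : E => ‖y‖) ν)
    (hco : ∀ θ : E → ℝ, ConvexOn ℝ univ θ → Integrable θ ν' → Integrable θ ν →
      ∫ y, θ y ∂ν' ≤ ∫ y, θ y ∂ν) :
    ∃ l : LG (E × E) →ₗ[ℝ] ℝ, (∀ h, (∀ p, 0 ≤ h.1 p) → 0 ≤ l h) ∧
      ∀ a, l (Tmap E a) = Lmap ν' ν hi' hi a := by
  obtain ⟨σ, hσ'⟩ := exists_section (Tmap E)
  have hpos := Lmap_nonneg ν' ν hi' hi hco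
  have hker : ∀ a, Tmap E a = 0 → Lmap ν' ν hi' hi a = 0 := fun a ha => by
    refine le_antisymm ?_ (hpos a fun p => by rw [ha]; simp)
    have := hpos (-a) fun p => by rw [map_neg, ha]; simp
    rw [map_neg] at this
    linarith
  let s : PointedCone ℝ (LG (E × E)) :=
    { carrier := {h | ∀ p, 0 ≤ h.1 p}
      add_mem' := fun {x y} hx hy p => add_nonneg (hx p) (hy p)
      zero_mem' := fun p => le_rfl
      smul_mem' := fun c x hx p => mul_nonneg c.2 (hx p) }
  obtain ⟨l, hl1, hl2⟩ := riesz_extension s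
    ⟨LinearMap.range (Tmap E), (Lmap ν' ν hi' hi).comp σ⟩ (fun x hx => by
      refine hpos (σ x) ?_
      rw [hσ' x]; exact hx) (fun h => by
      obtain ⟨h, hc, K, hK⟩ := h
      have h0 := const_bound hK
      refine ⟨⟨Tmap E (K • ⟨_, norm_mem_LG⟩, K • ⟨_, norm_mem_LG⟩, 0), ⟨_, rfl⟩⟩, fun p => ?_⟩
      have h1 : ‖p‖ ≤ ‖p.1‖ + ‖p.2‖ := by
        rw [Prod.norm_def]; exact max_le_add_of_nonneg (norm_nonneg _) (norm_nonneg _)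
      have h2 := (abs_le.1 (hK p)).1
      have : K * (1 + ‖p‖) ≤ K * (1 + ‖p.1‖) + K * (1 + ‖p.2‖) := by
        rw [← mul_add]; exact mul_le_mul_of_nonneg_left (by linarith) h0
      simp [Tmap_apply]
      linarith)
  refine ⟨l, hl2, fun a => ?_⟩
  have h1 := hl1 ⟨Tmap E a, ⟨a, rfl⟩⟩
  rw [h1]
  change Lmap ν' ν hi' hi (σ ⟨Tmap E a, ⟨a, rfl⟩⟩) = _
  have h2 := hker (σ ⟨Tmap E a, ⟨a, rfl⟩⟩ - a) (by rw [map_sub, hσ', sub_self])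
  rw [map_sub] at h2
  linarith


/-- Cutoff function. -/
def cut (n : ℕ) (y : E) : ℝ := max 0 (min 1 ((n : ℝ) + 1 - ‖y‖))

lemma cut_cont (n : ℕ) : Continuous (cut n : E → ℝ) := by unfold cut; fun_prop

lemma cut_nonneg (n : ℕ) (y : E) : 0 ≤ cut n y := le_max_left _ _

lemma cut_le_one (n : ℕ) (y : E) : cut n y ≤ 1 := max_le zero_le_one (min_le_left _ _)

lemma cut_anti (n : ℕ) {y z : E} (h : ‖z‖ ≤ ‖y‖) : cut n y ≤ cut n z := by
  unfold cut; gcongr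

lemma cut_eq_zero (n : ℕ) {y : E} (h : (n : ℝ) + 1 ≤ ‖y‖) : cut n y = 0 :=
  max_eq_left ((min_le_right _ _).trans (by linarith))

lemma cut_eq_one (n : ℕ) {y : E} (h : ‖y‖ ≤ n) : cut n y = 1 := by
  unfold cut
  rw [min_eq_left (by linarith), max_eq_right zero_le_one]

lemma cut_eventually (y : E) : ∀ᶠ n : ℕ in atTop, cut n y = 1 := by
  obtain ⟨N, hN⟩ := exists_nat_ge ‖y‖
  filter_upwards [eventually_ge_atTop N] with n hn
  exact cut_eq_one n (hN.trans (by exact_mod_cast hn))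

/-- Product cutoff. -/
def cut2 (n : ℕ) (p : E × E) : ℝ := cut n p.1 * cut n p.2

lemma cut2_cont (n : ℕ) : Continuous (cut2 n : E × E → ℝ) :=
  ((cut_cont n).comp continuous_fst).mul ((cut_cont n).comp continuous_snd)

lemma cut2_nonneg (n : ℕ) (p : E × E) : 0 ≤ cut2 n p :=
  mul_nonneg (cut_nonneg _ _) (cut_nonneg _ _)

lemma cut2_le_one (n : ℕ) (p : E × E) : cut2 n p ≤ 1 :=
  mul_le_one₀ (cut_le_one _ _) (cut_nonneg _ _) (cut_le_one _ _)

lemma cut2_eventually (p : E × E) : ∀ᶠ n : ℕ in atTop, cut2 n p = 1 := by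
  filter_upwards [cut_eventually p.1, cut_eventually p.2] with n h1 h2
  simp [cut2, h1, h2]

lemma cut2_support (n : ℕ) (h : E × E → ℝ) : HasCompactSupport (fun p => h p * cut2 n p) := by
  refine HasCompactSupport.intro (isCompact_closedBall 0 ((n : ℝ) + 1)) fun p hp => ?_
  have hp : (n : ℝ) + 1 < ‖p‖ := by simpa using hp
  rw [Prod.norm_def, lt_max_iff] at hp
  rcases hp with hp | hp
  · simp [cut2, cut_eq_zero n hp.le]
  · simp [cut2, cut_eq_zero n hp.le]

/-- Tail function. -/
def tail (n : ℕ) (y : E) : ℝ := 2 * ((1 + ‖y‖) * (1 - cut n y))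

lemma tail_nonneg (n : ℕ) (y : E) : 0 ≤ tail n y := by
  have := cut_le_one n y
  unfold tail
  have : 0 ≤ 1 - cut n y := by linarith
  positivity

lemma tail_le (n : ℕ) (y : E) : tail n y ≤ 2 * (1 + ‖y‖) := by
  have := cut_nonneg n y
  unfold tail
  have h : (1 + ‖y‖) * (1 - cut n y) ≤ (1 + ‖y‖) * 1 :=
    mul_le_mul_of_nonneg_left (by linarith) (by positivity)
  linarith

lemma tail_mem (n : ℕ) : (tail n : E → ℝ) ∈ LG E := by
  refine ⟨?_, 2, fun y => ?_⟩
  · unfold tail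
    have := cut_cont (E := E) n
    fun_prop
  · rw [abs_of_nonneg (tail_nonneg n y)]; exact tail_le n y

lemma tail_bound (n : ℕ) (p : E × E) :
    (1 + ‖p‖) * (1 - cut2 n p) ≤ tail n p.1 + tail n p.2 := by
  have key : ∀ y z : E, ‖z‖ ≤ ‖y‖ → (1 + ‖y‖) * (1 - cut n y * cut n z) ≤ tail n y := by
    intro y z h
    have h1 := cut_anti n h
    have h2 := cut_nonneg n y
    have h3 := cut_le_one n y
    have h4 : 1 - cut n y * cut n z ≤ 2 * (1 - cut n y) := by nlinarith
    have := mul_le_mul_of_nonneg_left h4 (show 0 ≤ 1 + ‖y‖ by positivity)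
    unfold tail; linarith
  rw [Prod.norm_def]
  rcases le_total ‖p.1‖ ‖p.2‖ with h | h
  · rw [max_eq_right h]
    have := key p.2 p.1 h
    have := tail_nonneg n p.1
    unfold cut2
    rw [mul_comm (cut n p.1)]
    linarith
  · rw [max_eq_left h]
    have := key p.1 p.2 h
    have := tail_nonneg n p.2
    unfold cut2
    linarith

lemma tail_tendsto (ν : Measure E) [IsProbabilityMeasure ν]
    (hi : Integrable (fun y : E => ‖y‖) ν) :
    Tendsto (fun n => ∫ y, tail n y ∂ν) atTop (𝓝 0) := by
  have h0 : (0 : ℝ) = ∫ y : E, (0 : ℝ) ∂ν := by simp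
  rw [h0]
  refine tendsto_integral_of_dominated_convergence (fun y => 2 * (1 + ‖y‖))
    (fun n => (tail_mem n).1.aestronglyMeasurable)
    ((LG.integrable norm_mem_LG hi).const_mul 2)
    (fun n => Eventually.of_forall fun y => ?_) (Eventually.of_forall fun y => ?_)
  · rw [Real.norm_of_nonneg (tail_nonneg n y)]; exact tail_le n y
  · refine tendsto_const_nhds.congr' ?_
    filter_upwards [cut_eventually y] with n hn
    simp [tail, hn]

lemma cc_mem_LG {F : Type*} [NormedAddCommGroup F] {h : F → ℝ} (hc : Continuous h)
    (hs : HasCompactSupport h) : h ∈ LG F := by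
  obtain ⟨K, hK⟩ := hs.exists_bound_of_continuous hc
  have h0 : 0 ≤ K := (norm_nonneg _).trans (hK 0)
  refine ⟨hc, K, fun y => (hK y).trans ?_⟩
  nlinarith [norm_nonneg y]

open CompactlySupported in
lemma exists_repr (ν' ν : Measure E) [IsProbabilityMeasure ν'] [IsProbabilityMeasure ν]
    (hi' : Integrable (fun y : E => ‖y‖) ν') (hi : Integrable (fun y : E => ‖y‖) ν)
    (l : LG (E × E) →ₗ[ℝ] ℝ) (hpos : ∀ h, (∀ p, 0 ≤ h.1 p) → 0 ≤ l h)
    (hl : ∀ a, l (Tmap E a) = Lmap ν' ν hi' hi a) :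
    ∃ π : Measure (E × E), IsFiniteMeasure π ∧
      ∀ h : LG (E × E), Integrable h.1 π ∧ ∫ p, h.1 p ∂π = l h := by
  let toLG : C_c(E × E, ℝ) →ₗ[ℝ] LG (E × E) :=
    { toFun := fun f => ⟨f, cc_mem_LG f.continuous f.hasCompactSupport⟩
      map_add' := fun f g => rfl
      map_smul' := fun c f => rfl }
  let Λ : C_c(E × E, ℝ) →ₚ[ℝ] ℝ := PositiveLinearMap.mk₀ (l.comp toLG) fun f hf =>
    hpos _ fun p => hf p
  let π := RealRMK.rieszMeasure Λ
  have hπ : ∀ (f : E × E → ℝ) (hc : Continuous f) (hs : HasCompactSupport f),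
      ∫ p, f p ∂π = l ⟨f, cc_mem_LG hc hs⟩ := fun f hc hs =>
    RealRMK.integral_rieszMeasure Λ ⟨⟨f, hc⟩, hs⟩
  have hmono : ∀ h k : LG (E × E), (∀ p, h.1 p ≤ k.1 p) → l h ≤ l k := fun h k hk => by
    have := hpos (k - h) fun p => sub_nonneg.2 (hk p)
    rw [map_sub] at this; linarith
  let w : LG (E × E) := ⟨fun p => 1 + ‖p‖, norm_mem_LG⟩
  have hwint : Integrable w.1 π := by
    refine ⟨w.2.1.aestronglyMeasurable, ?_⟩
    rw [hasFiniteIntegral_iff_ofReal (Eventually.of_forall fun p => by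
      change (0 : ℝ) ≤ 1 + ‖p‖; positivity)]
    refine lt_of_le_of_lt ?_ (ENNReal.ofReal_lt_top (r := l w))
    have hlim : ∀ p, liminf (fun n : ℕ => ENNReal.ofReal (w.1 p * cut2 n p)) atTop
        = ENNReal.ofReal (w.1 p) := fun p => by
      refine Tendsto.liminf_eq (tendsto_const_nhds.congr' ?_)
      filter_upwards [cut2_eventually p] with n hn
      simp [hn]
    calc ∫⁻ p, ENNReal.ofReal (w.1 p) ∂π
        = ∫⁻ p, liminf (fun n : ℕ => ENNReal.ofReal (w.1 p * cut2 n p)) atTop ∂π := by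
          simp_rw [hlim]
      _ ≤ liminf (fun n : ℕ => ∫⁻ p, ENNReal.ofReal (w.1 p * cut2 n p) ∂π) atTop :=
          lintegral_liminf_le fun n =>
            ((w.2.1.mul (cut2_cont n)).measurable).ennreal_ofReal
      _ ≤ ENNReal.ofReal (l w) := by
          refine liminf_le_of_le (by isBoundedDefault) fun b hb => ?_
          obtain ⟨n, hn⟩ := hb.exists
          refine hn.trans ?_
          have hcn : Continuous fun p => w.1 p * cut2 n p := w.2.1.mul (cut2_cont n)
          rw [← ofReal_integral_eq_lintegral_ofReal
            (hcn.integrable_of_hasCompactSupport (cut2_support n _))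
            (Eventually.of_forall fun p => mul_nonneg (by change (0 : ℝ) ≤ 1 + ‖p‖; positivity)
              (cut2_nonneg n p)), hπ _ hcn (cut2_support n _)]
          refine ENNReal.ofReal_le_ofReal (hmono _ _ fun p => ?_)
          exact mul_le_of_le_one_right (by change (0 : ℝ) ≤ 1 + ‖p‖; positivity) (cut2_le_one n p)
  have hfin : IsFiniteMeasure π := by
    have : Integrable (fun _ : E × E => (1 : ℝ)) π := by
      refine hwint.mono' aestronglyMeasurable_const (Eventually.of_forall fun p => ?_)
      change ‖(1 : ℝ)‖ ≤ 1 + ‖p‖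
      simp
    exact (integrable_const_iff_isFiniteMeasure one_ne_zero).1 this
  refine ⟨π, hfin, fun h => ?_⟩
  obtain ⟨h, hh⟩ := h
  obtain ⟨hc, K, hK⟩ := id hh
  have h0 := const_bound hK
  have hintg : Integrable h π := (hwint.const_mul K).mono' hc.aestronglyMeasurable
    (Eventually.of_forall fun p => hK p)
  refine ⟨hintg, ?_⟩
  have hcn : ∀ n, Continuous fun p => h p * cut2 n p := fun n => hc.mul (cut2_cont n)
  have lim1 : Tendsto (fun n : ℕ => ∫ p, h p * cut2 n p ∂π) atTop (𝓝 (∫ p, h p ∂π)) := by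
    refine tendsto_integral_of_dominated_convergence (fun p => ‖h p‖)
      (fun n => (hcn n).aestronglyMeasurable) hintg.norm
      (fun n => Eventually.of_forall fun p => ?_) (Eventually.of_forall fun p => ?_)
    · rw [norm_mul, Real.norm_of_nonneg (cut2_nonneg n p)]
      exact mul_le_of_le_one_right (norm_nonneg _) (cut2_le_one n p)
    · refine tendsto_const_nhds.congr' ?_
      filter_upwards [cut2_eventually p] with n hn
      simp [hn]
  have lim2 : Tendsto (fun n : ℕ => ∫ p, h p * cut2 n p ∂π) atTop (𝓝 (l ⟨h, hh⟩)) := by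
    rw [tendsto_iff_dist_tendsto_zero]
    have hb : Tendsto (fun n : ℕ => K * (∫ y, tail n y ∂ν' + ∫ y, tail n y ∂ν)) atTop (𝓝 0) := by
      simpa using ((tail_tendsto ν' hi').add (tail_tendsto ν hi)).const_mul K
    refine squeeze_zero (fun _ => dist_nonneg) (fun n => ?_) hb
    rw [hπ _ (hcn n) (cut2_support n _), Real.dist_eq, ← map_sub]
    let u : LG (E × E) := Tmap E (K • ⟨tail n, tail_mem n⟩, K • ⟨tail n, tail_mem n⟩, 0)
    have hu : l u = K * (∫ y, tail n y ∂ν' + ∫ y, tail n y ∂ν) := by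
      rw [hl]
      change ∫ y, K * tail n y ∂ν' + ∫ y, K * tail n y ∂ν = _
      rw [integral_const_mul, integral_const_mul]; ring
    have hup : ∀ p, |h p * cut2 n p - h p| ≤ u.1 p := fun p => by
      have e1 : h p * cut2 n p - h p = - (h p * (1 - cut2 n p)) := by ring
      have e2 : u.1 p = K * (tail n p.1 + tail n p.2) := by
        simp [u, Tmap_apply]; ring
      have e3 : 0 ≤ 1 - cut2 n p := by linarith [cut2_le_one n p]
      rw [e1, abs_neg, abs_mul, abs_of_nonneg e3, e2]
      calc |h p| * (1 - cut2 n p) ≤ K * (1 + ‖p‖) * (1 - cut2 n p) :=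
            mul_le_mul_of_nonneg_right (hK p) e3
        _ = K * ((1 + ‖p‖) * (1 - cut2 n p)) := by ring
        _ ≤ _ := mul_le_mul_of_nonneg_left (tail_bound n p) h0
    rw [← hu, abs_le, ← map_neg]
    exact ⟨hmono _ _ fun p => (abs_le.1 (hup p)).1, hmono _ _ fun p => (abs_le.1 (hup p)).2⟩
  exact tendsto_nhds_unique lim1 lim2

lemma bcf_mem_LG (f : E →ᵇ ℝ) : (f : E → ℝ) ∈ LG E := by
  refine ⟨f.continuous, ‖f‖, fun y => (f.norm_coe_le_norm y).trans ?_⟩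
  nlinarith [norm_nonneg y, norm_nonneg f]

open ProbabilityTheory in
/-- Strassen's theorem. -/
lemma strassen (ν' ν : Measure E) [IsProbabilityMeasure ν'] [IsProbabilityMeasure ν]
    (hi' : Integrable (fun y : E => ‖y‖) ν') (hi : Integrable (fun y : E => ‖y‖) ν)
    (hco : ∀ θ : E → ℝ, ConvexOn ℝ univ θ → Integrable θ ν' → Integrable θ ν →
      ∫ y, θ y ∂ν' ≤ ∫ y, θ y ∂ν) :
    ∃ K : Kernel E E, IsMarkovKernel K ∧ ν'.bind K = ν ∧ ∀ᵐ y ∂ν', ∫ z, z ∂(K y) = y := by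
  obtain ⟨l, hpos, hl⟩ := exists_functional ν' ν hi' hi hco
  obtain ⟨π, hfin, hπ⟩ := exists_repr ν' ν hi' hi l hpos hl
  have hT : ∀ a, ∫ p, (Tmap E a).1 p ∂π = Lmap ν' ν hi' hi a := fun a => by
    rw [(hπ _).2, hl]
  have hfst : π.fst = ν' := by
    refine ext_of_forall_integral_eq_of_IsFiniteMeasure fun f => ?_
    rw [Measure.fst, integral_map measurable_fst.aemeasurable f.continuous.aestronglyMeasurable]
    have := hT (⟨f, bcf_mem_LG f⟩, 0, 0)
    simpa [Tmap_apply, Lmap] using this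
  have hsnd : π.snd = ν := by
    refine ext_of_forall_integral_eq_of_IsFiniteMeasure fun f => ?_
    rw [Measure.snd, integral_map measurable_snd.aemeasurable f.continuous.aestronglyMeasurable]
    have := hT (0, ⟨f, bcf_mem_LG f⟩, 0)
    simpa [Tmap_apply, Lmap] using this
  have hnorm : Integrable (fun p : E × E => 1 + ‖p‖) π := (hπ ⟨_, norm_mem_LG⟩).1
  have hdiff : Integrable (fun p : E × E => p.2 - p.1) π := by
    refine (hnorm.const_mul 2).mono' (by fun_prop) (Eventually.of_forall fun p => ?_)
    have h1 : ‖p.1‖ ≤ ‖p‖ := norm_fst_le p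
    have h2 : ‖p.2‖ ≤ ‖p‖ := norm_snd_le p
    refine (norm_sub_le _ _).trans ?_
    linarith
  have hmart : ∀ g : E → ℝ, Continuous g → HasCompactSupport g →
      ∫ p, g p.1 • (p.2 - p.1) ∂π = 0 := by
    intro g hg hs
    obtain ⟨c, hcb⟩ := hs.exists_bound_of_continuous hg
    have hintg : Integrable (fun p : E × E => g p.1 • (p.2 - p.1)) π :=
      hdiff.bdd_smul c (hg.comp continuous_fst).aestronglyMeasurable
        (Eventually.of_forall fun p => hcb p.1)
    refine ext_inner_left ℝ fun v => ?_
    rw [inner_zero_right, ← integral_inner hintg]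
    let φ : E →ᵇ E := BoundedContinuousFunction.ofNormedAddCommGroup (fun y => g y • v)
      (by fun_prop) (c * ‖v‖) (fun y => by
        rw [norm_smul]; exact mul_le_mul_of_nonneg_right (hcb y) (norm_nonneg _))
    have := hT (0, 0, φ)
    simp only [Tmap_apply, Lmap] at this
    simpa [φ, inner_smul_left, inner_smul_right] using this
  have hdis : ν' ⊗ₘ π.condKernel = π := by
    rw [← hfst]; exact π.disintegrate π.condKernel
  refine ⟨π.condKernel, inferInstance, ?_, ?_⟩
  · rw [← Measure.snd_compProd, hdis, hsnd]
  · rw [← hdis] at hdiff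
    have hae : ∀ᵐ y ∂ν', Integrable (fun z => z - y) (π.condKernel y) :=
      ((Measure.integrable_compProd_iff hdiff.1).1 hdiff).1
    have hloc : Integrable (fun y => ∫ z, (z - y) ∂(π.condKernel y)) ν' :=
      Integrable.integral_compProd hdiff
    have := ae_eq_zero_of_integral_contDiff_smul_eq_zero hloc.locallyIntegrable
      (fun g hg hs => by
        have h1 := hmart g hg.continuous hs
        obtain ⟨c, hcb⟩ := hs.exists_bound_of_continuous hg.continuous
        have hintg : Integrable (fun p : E × E => g p.1 • (p.2 - p.1)) (ν' ⊗ₘ π.condKernel) :=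
          hdiff.bdd_smul c (hg.continuous.comp continuous_fst).aestronglyMeasurable
            (Eventually.of_forall fun p => hcb p.1)
        rw [← hdis, Measure.integral_compProd hintg] at h1
        simpa [integral_smul] using h1)
    filter_upwards [this, hae] with y hy hyi
    have hz : Integrable (fun z : E => z) (π.condKernel y) := by
      refine (hyi.add (integrable_const y)).congr (Eventually.of_forall fun z => ?_)
      simp
    rw [integral_sub hz (integrable_const y)] at hy
    simpa [sub_eq_zero] using hy

end Strassen

section Main

open ProbabilityTheory

lemma measurable_epos : Measurable epos := by
  unfold epos
  exact Measurable.ite (measurableSet_singleton _) measurable_const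
    (measurable_ereal_toReal.ennreal_ofReal)

lemma epos_coe (t : ℝ) : epos (t : EReal) = ENNReal.ofReal t := by
  simp [epos]

lemma eInt_congr_ae {X : Type*} [MeasurableSpace X] {f g : X → EReal} {μ : Measure X}
    (h : ∀ᵐ x ∂μ, f x = g x) : eInt f μ = eInt g μ := by
  unfold eInt
  rw [lintegral_congr_ae (g := fun x => epos (g x)) (by filter_upwards [h] with x hx; rw [hx]),
    lintegral_congr_ae (f := fun x => epos (-(f x))) (g := fun x => epos (-(g x)))
      (by filter_upwards [h] with x hx; rw [hx])]

lemma eInt_map {X Z : Type*} [MeasurableSpace X] [MeasurableSpace Z] {f : Z → EReal}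
    (hf : Measurable f) {g : X → Z} (hg : Measurable g) (μ : Measure X) :
    eInt f (μ.map g) = eInt (fun x => f (g x)) μ := by
  unfold eInt
  rw [lintegral_map (f := fun x => epos (f x)) (measurable_epos.comp hf) hg,
    lintegral_map (f := fun x => epos (-(f x))) (measurable_epos.comp hf.neg) hg]

lemma eInt_coe {X : Type*} [MeasurableSpace X] {θ : X → ℝ} {μ : Measure X}
    (h : Integrable θ μ) : eInt (fun x => ((θ x : ℝ) : EReal)) μ = ((∫ x, θ x ∂μ : ℝ) : EReal) := by
  unfold eInt
  simp_rw [← EReal.coe_neg, epos_coe]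
  rw [integral_eq_lintegral_pos_part_sub_lintegral_neg_part h]
  have h1 : ∫⁻ x, ENNReal.ofReal (θ x) ∂μ ≠ ⊤ := h.lintegral_lt_top.ne
  have h2 : ∫⁻ x, ENNReal.ofReal (-θ x) ∂μ ≠ ⊤ := h.neg.lintegral_lt_top.ne
  rw [EReal.coe_sub]
  lift (∫⁻ x, ENNReal.ofReal (θ x) ∂μ) to ℝ≥0 using h1 with s
  lift (∫⁻ x, ENNReal.ofReal (-θ x) ∂μ) to ℝ≥0 using h2 with t
  rfl

lemma convex_lower {E : Type*} [NormedAddCommGroup E] [NormedSpace ℝ E] [FiniteDimensional ℝ E]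
    {θ : E → ℝ} (h : ConvexOn ℝ univ θ) : ∃ K : ℝ, 0 ≤ K ∧ ∀ y, -(K * (1 + ‖y‖)) ≤ θ y := by
  have hc : Continuous θ := continuousOn_univ.1 (h.continuousOn isOpen_univ)
  obtain ⟨M, hM⟩ := (isCompact_closedBall (0 : E) 1).exists_bound_of_continuousOn hc.continuousOn
  have hM0 : 0 ≤ M := (norm_nonneg _).trans (hM 0 (by simp))
  refine ⟨2 * M, by positivity, fun y => ?_⟩
  rcases eq_or_ne y 0 with rfl | hy
  · have := (abs_le.1 (hM 0 (by simp))).1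
    simp; linarith
  have hy0 : 0 < ‖y‖ := norm_pos_iff.2 hy
  have hpos : 0 < 1 + ‖y‖ := by linarith
  have key := h.2 (mem_univ y) (mem_univ (-(‖y‖⁻¹ • y)))
    (show 0 ≤ 1 / (1 + ‖y‖) by positivity) (show 0 ≤ ‖y‖ / (1 + ‖y‖) by positivity)
    (by field_simp)
  have e : (1 / (1 + ‖y‖)) • y + (‖y‖ / (1 + ‖y‖)) • (-(‖y‖⁻¹ • y)) = 0 := by
    rw [smul_neg, smul_smul, ← sub_eq_add_neg, ← sub_smul]
    have : 1 / (1 + ‖y‖) - ‖y‖ / (1 + ‖y‖) * ‖y‖⁻¹ = 0 := by field_simp; ring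
    rw [this, zero_smul]
  rw [e] at key
  have h1 := (abs_le.1 (hM 0 (by simp))).1
  have h2 := (abs_le.1 (hM (-(‖y‖⁻¹ • y)) (by
    simp [norm_smul, inv_mul_cancel₀ hy0.ne']))).2
  simp only [smul_eq_mul] at key
  have key2 : θ 0 * (1 + ‖y‖) ≤ θ y + ‖y‖ * θ (-(‖y‖⁻¹ • y)) := by
    have := mul_le_mul_of_nonneg_right key hpos.le
    refine this.trans (le_of_eq ?_)
    field_simp
  nlinarith

section Jensen

variable {E : Type*} [NormedAddCommGroup E] [InnerProductSpace ℝ E] [FiniteDimensional ℝ E]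
  [MeasurableSpace E] [BorelSpace E]

lemma jensen_lintegral {θ : E → ℝ} (h : ConvexOn ℝ univ θ) (h0 : ∀ y, 0 ≤ θ y) {p : Measure E}
    [IsProbabilityMeasure p] (hp : Integrable (fun y : E => y) p) :
    ENNReal.ofReal (θ (∫ y, y ∂p)) ≤ ∫⁻ y, ENNReal.ofReal (θ y) ∂p := by
  have hc := convex_continuous h
  by_cases htop : ∫⁻ y, ENNReal.ofReal (θ y) ∂p = ⊤
  · rw [htop]; exact le_top
  have hintg : Integrable θ p :=
    ⟨hc.aestronglyMeasurable, by
      rw [hasFiniteIntegral_iff_ofReal (Eventually.of_forall h0)]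
      exact lt_top_iff_ne_top.2 htop⟩
  rw [← ofReal_integral_eq_lintegral_ofReal hintg (Eventually.of_forall h0)]
  exact ENNReal.ofReal_le_ofReal
    (h.map_integral_le hc.continuousOn isClosed_univ (by simp) hp hintg)

lemma convexOrder_of_kernel {Ω : Type*} [MeasurableSpace Ω] (P : Measure Ω)
    [IsProbabilityMeasure P] (κ : Kernel Ω E) [IsFiniteKernel κ]
    (hκ : ∀ᵐ ω ∂P, IsProbabilityMeasure (κ ω)) (ν : Measure E) [IsProbabilityMeasure ν]
    (hν : P.bind κ = ν) (hi : Integrable (fun y : E => ‖y‖) ν) :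
    ConvexOrder (P.map fun ω => ∫ y, y ∂(κ ω)) ν := by
  intro θ hθ
  have hc := convex_continuous hθ
  obtain ⟨K, hK0, hK⟩ := convex_lower hθ
  have hb : Measurable fun ω => ∫ y, y ∂(κ ω) :=
    (StronglyMeasurable.integral_kernel (stronglyMeasurable_id)).measurable
  have hneg : ∫⁻ y, ENNReal.ofReal (-θ y) ∂ν ≠ ⊤ := by
    have hKi : Integrable (fun y : E => K * (1 + ‖y‖)) ν := (LG.integrable norm_mem_LG hi).const_mul K
    refine (lt_of_le_of_lt (lintegral_mono fun y => ENNReal.ofReal_le_ofReal ?_)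
      hKi.lintegral_lt_top).ne
    linarith [hK y]
  by_cases htop : ∫⁻ y, ENNReal.ofReal (θ y) ∂ν = ⊤
  · have : eInt (fun y => ((θ y : ℝ) : EReal)) ν = ⊤ := by
      unfold eInt
      simp_rw [← EReal.coe_neg, epos_coe]
      rw [htop]
      lift (∫⁻ y, ENNReal.ofReal (-θ y) ∂ν) to ℝ≥0 using hneg with t
      rfl
    rw [this]; exact le_top
  have hsnd : (P ⊗ₘ κ).snd = ν := by rw [Measure.snd_compProd, hν]
  have hintg : Integrable θ ν := by
    refine ⟨hc.aestronglyMeasurable, ?_⟩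
    refine lt_of_le_of_lt (b := ∫⁻ y, (ENNReal.ofReal (θ y) + ENNReal.ofReal (-θ y)) ∂ν)
      (lintegral_mono fun y => ?_) ?_
    · rw [← ofReal_norm, Real.norm_eq_abs]
      rcases le_total 0 (θ y) with h | h
      · rw [abs_of_nonneg h]; exact le_self_add
      · rw [abs_of_nonpos h]; exact le_add_self
    · rw [lintegral_add_left hc.measurable.ennreal_ofReal]
      exact ENNReal.add_lt_top.2 ⟨lt_top_iff_ne_top.2 htop, lt_top_iff_ne_top.2 hneg⟩
  have hid : Integrable (fun y : E => y) ν := (integrable_norm_iff (by fun_prop)).1 hi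
  have hid2 : Integrable (fun p : Ω × E => p.2) (P ⊗ₘ κ) := by
    have h := hid
    rw [← hsnd] at h
    exact h.comp_measurable measurable_snd
  have hθ2 : Integrable (fun p : Ω × E => θ p.2) (P ⊗ₘ κ) := by
    have h := hintg
    rw [← hsnd] at h
    exact h.comp_measurable measurable_snd
  have ae1 : ∀ᵐ ω ∂P, Integrable (fun y : E => y) (κ ω) :=
    ((Measure.integrable_compProd_iff hid2.1).1 hid2).1
  have ae2 : ∀ᵐ ω ∂P, Integrable θ (κ ω) :=
    ((Measure.integrable_compProd_iff hθ2.1).1 hθ2).1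
  have hi1 : Integrable (fun ω => ∫ y, y ∂(κ ω)) P := Integrable.integral_compProd hid2
  have hi2 : Integrable (fun ω => ∫ y, θ y ∂(κ ω)) P := Integrable.integral_compProd hθ2
  have hj : ∀ᵐ ω ∂P, θ (∫ y, y ∂(κ ω)) ≤ ∫ y, θ y ∂(κ ω) := by
    filter_upwards [hκ, ae1, ae2] with ω h1 h2 h3
    exact hθ.map_integral_le hc.continuousOn isClosed_univ (by simp) h2 h3
  have hi3 : Integrable (fun ω => θ (∫ y, y ∂(κ ω))) P := by
    refine Integrable.mono' (g := fun ω => K * (1 + ‖∫ y, y ∂(κ ω)‖) + ‖∫ y, θ y ∂(κ ω)‖) ?_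
      (hc.measurable.comp hb).aestronglyMeasurable ?_
    · exact (((integrable_const 1).add hi1.norm).const_mul K).add hi2.norm
    · filter_upwards [hj] with ω h
      have h1 := hK (∫ y, y ∂(κ ω))
      have h2 := Real.le_norm_self (∫ y, θ y ∂(κ ω))
      have h3 := norm_nonneg (∫ y, θ y ∂(κ ω))
      have h4 : 0 ≤ K * (1 + ‖∫ y, y ∂(κ ω)‖) := by positivity
      exact abs_le.2 ⟨by linarith, by linarith⟩
  have hi4 : Integrable θ (P.map fun ω => ∫ y, y ∂(κ ω)) :=
    (integrable_map_measure hc.aestronglyMeasurable hb.aemeasurable).2 hi3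
  rw [eInt_coe hi4, eInt_coe hintg, EReal.coe_le_coe_iff,
    integral_map hb.aemeasurable hc.aestronglyMeasurable]
  refine (integral_mono_ae hi3 hi2 hj).trans (le_of_eq ?_)
  rw [← Measure.integral_compProd hθ2, ← hsnd, Measure.snd,
    integral_map measurable_snd.aemeasurable hc.aestronglyMeasurable]

end Jensen

section Hat

variable {X Y : Type*} [MeasurableSpace X] [MeasurableSpace Y]

/-- The kernel `(x, p) ↦ p`, cut off outside probability measures. -/
def evalK (X Y : Type*) [MeasurableSpace X] [MeasurableSpace Y] : Kernel (X × Measure Y) Y where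
  toFun xp := open Classical in if xp.2 univ = 1 then xp.2 else 0
  measurable' := by
    classical
    refine Measurable.ite ?_ measurable_snd measurable_const
    exact ((Measure.measurable_coe MeasurableSet.univ).comp measurable_snd)
      (measurableSet_singleton 1)

lemma evalK_of_prob (xp : X × Measure Y) (h : IsProbabilityMeasure xp.2) :
    evalK X Y xp = xp.2 := by
  change (open Classical in if xp.2 univ = 1 then xp.2 else 0) = xp.2
  rw [if_pos h.measure_univ]

instance : IsFiniteKernel (evalK X Y) := by
  refine ⟨1, ENNReal.one_lt_top, fun xp => ?_⟩
  change (open Classical in if xp.2 univ = 1 then xp.2 else 0) univ ≤ 1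
  split_ifs with h
  · exact h.le
  · simp

lemma intensityHat_lintegral {P : Measure (X × Measure Y)}
    (hP : ∀ᵐ xp ∂P, IsProbabilityMeasure xp.2) {f : X × Y → ℝ≥0∞} (hf : Measurable f) :
    ∫⁻ z, f z ∂(intensityHat P) = ∫⁻ xp, ∫⁻ y, f (xp.1, y) ∂xp.2 ∂P := by
  have h1 : intensityHat P
      = P.bind (Kernel.deterministic (Prod.fst : X × Measure Y → X) measurable_fst ×ₖ evalK X Y) := by
    unfold intensityHat
    refine Measure.bind_congr_right ?_
    filter_upwards [hP] with xp h
    rw [Kernel.prod_apply, Kernel.deterministic_apply, evalK_of_prob xp h]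
  rw [h1, Measure.lintegral_bind (Kernel.aemeasurable _) hf.aemeasurable]
  refine lintegral_congr_ae ?_
  filter_upwards [hP] with xp h
  rw [Kernel.prod_apply, Kernel.deterministic_apply, evalK_of_prob xp h,
    lintegral_prod _ hf.aemeasurable, lintegral_dirac']
  exact hf.lintegral_prod_right'

lemma hat_fst {P : Measure (X × Measure Y)}
    (hP : ∀ᵐ xp ∂P, IsProbabilityMeasure xp.2) : (intensityHat P).map Prod.fst = P.map Prod.fst := by
  refine Measure.ext_of_lintegral _ fun f hf => ?_
  rw [lintegral_map hf measurable_fst, lintegral_map hf measurable_fst,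
    intensityHat_lintegral (f := fun z => f z.1) hP
      (hf.comp measurable_fst)]
  refine lintegral_congr_ae ?_
  filter_upwards [hP] with xp h
  simp

lemma hat_snd {P : Measure (X × Measure Y)}
    (hP : ∀ᵐ xp ∂P, IsProbabilityMeasure xp.2) :
    (intensityHat P).map Prod.snd = P.bind (evalK X Y) := by
  refine Measure.ext_of_lintegral _ fun f hf => ?_
  rw [lintegral_map hf measurable_snd, Measure.lintegral_bind (Kernel.aemeasurable _) hf.aemeasurable,
    intensityHat_lintegral (f := fun z => f z.2) hP
      (hf.comp measurable_snd)]
  refine lintegral_congr_ae ?_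
  filter_upwards [hP] with xp h
  rw [evalK_of_prob xp h]

end Hat

section Final

variable {E : Type*} [NormedAddCommGroup E] [InnerProductSpace ℝ E] [FiniteDimensional ℝ E]
  [MeasurableSpace E] [BorelSpace E]

lemma FinMom.integrable_norm {r : ℝ} (hr : 1 ≤ r) {ν : Measure E} [IsProbabilityMeasure ν]
    (h : FinMom r (0 : E) ν) : Integrable (fun y : E => ‖y‖) ν := by
  have h0 : Continuous fun y : E => ‖y‖ ^ r :=
    continuous_norm.rpow_const fun y => Or.inr (by linarith)
  have h1 : Integrable (fun y : E => ‖y‖ ^ r) ν := by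
    refine ⟨h0.aestronglyMeasurable, ?_⟩
    rw [hasFiniteIntegral_iff_ofReal (Eventually.of_forall fun y => by positivity)]
    simpa [FinMom] using h
  refine ((integrable_const (1 : ℝ)).add h1).mono' (by fun_prop)
    (Eventually.of_forall fun y => ?_)
  rw [norm_norm]
  change ‖y‖ ≤ 1 + ‖y‖ ^ r
  have hp : 0 ≤ ‖y‖ ^ r := by positivity
  rcases le_total ‖y‖ 1 with h | h
  · linarith
  · have := Real.rpow_le_rpow_of_exponent_le h hr
    rw [Real.rpow_one] at this
    linarith

lemma Pr.integrable_id {r : ℝ} (hr : 1 ≤ r) {p : Measure E} (hp : p ∈ Pr r (0 : E)) :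
    Integrable (fun y : E => y) p := by
  have := hp.1
  exact (integrable_norm_iff (by fun_prop)).1 (FinMom.integrable_norm hr hp.2)

lemma measurable_mom (r : ℝ) (hr : 1 ≤ r) :
    Measurable fun y : E => ENNReal.ofReal (dist y 0 ^ r) := by
  have h0 : Continuous fun y : E => dist y 0 ^ r :=
    (continuous_id.dist continuous_const).rpow_const fun y => Or.inr (by linarith)
  exact h0.measurable.ennreal_ofReal

lemma dirac_mem_Pr (r : ℝ) (hr : 1 ≤ r) (y : E) : Measure.dirac y ∈ Pr r (0 : E) := by
  refine ⟨inferInstance, ?_⟩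
  unfold FinMom
  rw [lintegral_dirac' _ (measurable_mom r hr)]
  exact ENNReal.ofReal_lt_top

lemma bary_dirac (y : E) : bary (Measure.dirac y) = y := by
  simp [bary]

lemma convexOn_mom (r : ℝ) (hr : 1 ≤ r) : ConvexOn ℝ univ fun y : E => dist y 0 ^ r := by
  simp only [dist_zero_right]
  have h1 : ConvexOn ℝ univ (fun y : E => ‖y‖) := convexOn_univ_norm
  refine ⟨convex_univ, fun x _ y _ a b ha hb hab => ?_⟩
  have h2 := (convexOn_rpow hr).2 (norm_nonneg x) (norm_nonneg y) ha hb hab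
  refine le_trans ?_ h2
  exact Real.rpow_le_rpow (norm_nonneg _) (h1.2 (mem_univ x) (mem_univ y) ha hb hab) (by linarith)

lemma dir1 {X : Type*} [MeasurableSpace X] (r : ℝ) (hr : 1 ≤ r)
    (μ : Measure X) (ν : Measure E) [IsProbabilityMeasure ν] (hν : FinMom r (0 : E) ν)
    (C : X × Measure E → EReal) (hC : Measurable C)
    (hbary : ∀ x, ∀ p ∈ Pr r (0 : E), ∀ q ∈ Pr r (0 : E), bary p = bary q → C (x, p) = C (x, q))
    (P : Measure (X × Measure E)) (hP : P ∈ Lambda μ ν) :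
    ∃ ν' : Measure E, IsProbabilityMeasure ν' ∧ FinMom r (0 : E) ν' ∧ ConvexOrder ν' ν ∧
      ∃ π ∈ Couplings μ ν', eInt C P = eInt (fun z => C (z.1, Measure.dirac z.2)) π := by
  obtain ⟨hP1, hP2, hP3, hP4⟩ := hP
  rw [hat_fst hP2] at hP3
  rw [hat_snd hP2] at hP4
  let b : X × Measure E → E := fun xp => ∫ y, y ∂(evalK X E xp)
  have hb : Measurable b :=
    (StronglyMeasurable.integral_kernel (stronglyMeasurable_id)).measurable
  have hbeq : ∀ xp : X × Measure E, IsProbabilityMeasure xp.2 → b xp = bary xp.2 := fun xp h => by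
    simp only [b, bary, evalK_of_prob xp h]
  have hm := measurable_mom (E := E) r hr
  have hν2 : ∫⁻ xp, ∫⁻ y, ENNReal.ofReal (dist y 0 ^ r) ∂(evalK X E xp) ∂P < ⊤ := by
    rw [← Measure.lintegral_bind (Kernel.aemeasurable _) hm.aemeasurable, hP4]
    exact hν
  have hae : ∀ᵐ xp ∂P, xp.2 ∈ Pr r (0 : E) := by
    filter_upwards [hP2, ae_lt_top hm.lintegral_kernel hν2.ne] with xp h1 h2
    rw [evalK_of_prob xp h1] at h2
    exact ⟨h1, h2⟩
  have hprobK : ∀ᵐ xp ∂P, IsProbabilityMeasure (evalK X E xp) := by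
    filter_upwards [hP2] with xp h1
    rw [evalK_of_prob xp h1]; exact h1
  have hpair : Measurable fun xp : X × Measure E => (xp.1, b xp) := measurable_fst.prodMk hb
  refine ⟨P.map b, Measure.isProbabilityMeasure_map hb.aemeasurable, ?_,
    convexOrder_of_kernel P (evalK X E) hprobK ν hP4 (FinMom.integrable_norm hr hν),
    P.map (fun xp => (xp.1, b xp)), ⟨?_, ?_⟩, ?_⟩
  · unfold FinMom
    rw [lintegral_map hm hb]
    refine lt_of_le_of_lt (lintegral_mono_ae ?_) hν2
    filter_upwards [hae] with xp h
    have h1 := h.1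
    have := jensen_lintegral (convexOn_mom (E := E) r hr) (fun y => by positivity)
      (Pr.integrable_id hr h)
    rw [hbeq xp h1, evalK_of_prob xp h1]
    exact this
  · rw [Measure.map_map measurable_fst hpair, ← hP3]; rfl
  · rw [Measure.map_map measurable_snd hpair]; rfl
  · have hd : Measurable fun z : X × E => C (z.1, Measure.dirac z.2) :=
      hC.comp (measurable_fst.prodMk (Measure.measurable_dirac.comp measurable_snd))
    rw [eInt_map hd hpair]
    refine eInt_congr_ae ?_
    filter_upwards [hae] with xp h
    refine hbary xp.1 xp.2 h _ (dirac_mem_Pr r hr _) ?_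
    rw [bary_dirac, hbeq xp h.1]

lemma dir2 {X : Type*} [MeasurableSpace X] (r : ℝ) (hr : 1 ≤ r)
    (μ : Measure X) [IsProbabilityMeasure μ] (ν : Measure E) [IsProbabilityMeasure ν]
    (hν : FinMom r (0 : E) ν)
    (C : X × Measure E → EReal) (hC : Measurable C)
    (hbary : ∀ x, ∀ p ∈ Pr r (0 : E), ∀ q ∈ Pr r (0 : E), bary p = bary q → C (x, p) = C (x, q))
    (ν' : Measure E) [IsProbabilityMeasure ν'] (hν' : FinMom r (0 : E) ν')
    (hco : ConvexOrder ν' ν) (π : Measure (X × E)) (hπ : π ∈ Couplings μ ν') :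
    ∃ P ∈ Lambda μ ν, eInt (fun z => C (z.1, Measure.dirac z.2)) π = eInt C P := by
  obtain ⟨K, hK1, hK2, hK3⟩ := strassen ν' ν (FinMom.integrable_norm hr hν')
    (FinMom.integrable_norm hr hν) (fun θ h h1 h2 => by
      have := hco θ h
      rwa [eInt_coe h1, eInt_coe h2, EReal.coe_le_coe_iff] at this)
  obtain ⟨hπ1, hπ2⟩ := hπ
  have hprob : IsProbabilityMeasure π := by
    refine ⟨?_⟩
    have h : (π.map Prod.fst) univ = 1 := by rw [hπ1]; exact measure_univ
    rwa [Measure.map_apply measurable_fst MeasurableSet.univ] at h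
  have hm := measurable_mom (E := E) r hr
  have hmap : Measurable fun z : X × E => (z.1, K z.2) :=
    measurable_fst.prodMk (K.measurable.comp measurable_snd)
  have hsetm : MeasurableSet {xp : X × Measure E | IsProbabilityMeasure xp.2} := by
    have : {xp : X × Measure E | IsProbabilityMeasure xp.2} = {xp | xp.2 univ = 1} := by
      ext xp; exact isProbabilityMeasure_iff
    rw [this]
    exact ((Measure.measurable_coe MeasurableSet.univ).comp measurable_snd)
      (measurableSet_singleton 1)
  have hP2 : ∀ᵐ xp ∂(π.map fun z : X × E => (z.1, K z.2)), IsProbabilityMeasure xp.2 :=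
    (ae_map_iff hmap.aemeasurable hsetm).2 (Eventually.of_forall fun z => hK1.isProbabilityMeasure z.2)
  have hKae : ∀ᵐ y ∂ν', K y ∈ Pr r (0 : E) := by
    have h1 : ∫⁻ y, ∫⁻ z, ENNReal.ofReal (dist z 0 ^ r) ∂(K y) ∂ν' < ⊤ := by
      rw [← Measure.lintegral_bind (Kernel.aemeasurable _) hm.aemeasurable, hK2]
      exact hν
    filter_upwards [ae_lt_top hm.lintegral_kernel h1.ne] with y h2
    exact ⟨hK1.isProbabilityMeasure y, h2⟩
  refine ⟨π.map fun z => (z.1, K z.2), ⟨Measure.isProbabilityMeasure_map hmap.aemeasurable, hP2,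
    ?_, ?_⟩, ?_⟩
  · rw [hat_fst hP2, Measure.map_map measurable_fst hmap, ← hπ1]; rfl
  · rw [hat_snd hP2, ← hK2, ← hπ2]
    refine Measure.ext_of_lintegral _ fun f hf => ?_
    rw [Measure.lintegral_bind (Kernel.aemeasurable _) hf.aemeasurable,
      Measure.lintegral_bind (Kernel.aemeasurable _) hf.aemeasurable,
      lintegral_map hf.lintegral_kernel hmap, lintegral_map hf.lintegral_kernel measurable_snd]
    refine lintegral_congr fun z => ?_
    rw [evalK_of_prob (z.1, K z.2) (hK1.isProbabilityMeasure z.2)]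
  · rw [eInt_map hC hmap]
    refine eInt_congr_ae ?_
    have : ∀ᵐ z ∂π, K z.2 ∈ Pr r (0 : E) ∧ ∫ w, w ∂(K z.2) = z.2 := by
      rw [← hπ2] at hKae hK3
      exact ae_of_ae_map measurable_snd.aemeasurable (hKae.and hK3)
    filter_upwards [this] with z hz
    refine hbary z.1 _ (dirac_mem_Pr r hr _) _ hz.1 ?_
    rw [bary_dirac]
    exact hz.2.symm

end Final

end Main

end WOT

open WOT

/-- barycentric costs and the convex order
(Proposition `prop:convex order barycentric C` (a)). -/
theorem statement9 {X : Type*} [MeasurableSpace X] [MetricSpace X] [CompleteSpace X]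
    [SecondCountableTopology X] [BorelSpace X] (d : ℕ) (r : ℝ) (hr : 1 ≤ r) (x₀ : X)
    (μ : Measure X) (ν : Measure (EuclideanSpace ℝ (Fin d)))
    [IsProbabilityMeasure μ] [IsProbabilityMeasure ν]
    (hμ : FinMom r x₀ μ) (hν : FinMom r (0 : EuclideanSpace ℝ (Fin d)) ν)
    (C : X × Measure (EuclideanSpace ℝ (Fin d)) → EReal) (hC : Measurable C)
    (hbary : ∀ x, ∀ p ∈ Pr r (0 : EuclideanSpace ℝ (Fin d)),
      ∀ q ∈ Pr r (0 : EuclideanSpace ℝ (Fin d)), bary p = bary q → C (x, p) = C (x, q))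
    (hwell : ∀ P ∈ Lambda μ ν, eIntWellDef C P) :
    sInf {v : EReal | ∃ P ∈ Lambda μ ν, v = eInt C P}
      = sInf {v : EReal | ∃ ν' : Measure (EuclideanSpace ℝ (Fin d)),
          IsProbabilityMeasure ν' ∧ FinMom r (0 : EuclideanSpace ℝ (Fin d)) ν' ∧
          ConvexOrder ν' ν ∧
          ∃ π ∈ Couplings μ ν', v = eInt (fun z => C (z.1, Measure.dirac z.2)) π} := by
  congr 1
  ext v
  constructor
  · rintro ⟨P, hP, rfl⟩
    exact dir1 r hr μ ν hν C hC hbary P hP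
  · rintro ⟨ν', h1, h2, h3, π, hπ, rfl⟩
    exact dir2 r hr μ ν hν C hC hbary ν' h2 h3 π hπ
end
end

section
/- Let μ, ν ∈ 𝒫_1(ℝ), let θ : ℝ → ℝ be convex, and suppose there exist f ∈ L¹(μ) and g ∈ L¹(ν) with |θ(y − x)| ≤ f(x) + g(y) for all x, y ∈ ℝ. Let π^a ∈ Π(μ,ν) be the anticomonotone coupling, i.e. the pushforward of Lebesgue measure on (0,1) under u ↦ (F_μ^{-1}(u), F_ν^{-1}(1 − u)). Then ∫ θ(y − x) π^a(dx,dy) = sup_{π ∈ Π(μ,ν)} ∫ θ(y − x) π(dx,dy). -/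
open MeasureTheory Set Filter
open scoped ENNReal NNReal Topology RealInnerProductSpace

noncomputable section

open WOT

/-- The cumulative distribution function of a measure on `ℝ`. -/
def cdf (μ : Measure ℝ) (x : ℝ) : ℝ := (μ (Iic x)).toReal

/-- The quantile (generalized inverse cdf) of a measure on `ℝ`. -/
def quantile (μ : Measure ℝ) (u : ℝ) : ℝ := sInf {x : ℝ | u ≤ cdf μ x}

/-- The anticomonotone coupling of two measures on `ℝ`: the image of Lebesgue measure on
`(0,1)` under `u ↦ (F_μ⁻¹(u), F_ν⁻¹(1-u))`. -/
def anticomonotone (μ ν : Measure ℝ) : Measure (ℝ × ℝ) :=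
  (volume.restrict (Ioo (0 : ℝ) 1)).map fun u => (quantile μ u, quantile ν (1 - u))

lemma aux_cdf_eq (μ : Measure ℝ) [IsProbabilityMeasure μ] (x : ℝ) :
    cdf μ x = ProbabilityTheory.cdf μ x := by
  rw [ProbabilityTheory.cdf_eq_real]; rfl

lemma aux_quantile_le_iff (μ : Measure ℝ) [IsProbabilityMeasure μ] {u : ℝ} (hu : u ∈ Ioo (0:ℝ) 1)
    (a : ℝ) : quantile μ u ≤ a ↔ u ≤ cdf μ a := by
  unfold quantile
  simp only [aux_cdf_eq]
  have hmono := ProbabilityTheory.monotone_cdf μ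
  have hne : {x : ℝ | u ≤ ProbabilityTheory.cdf μ x}.Nonempty := by
    have := (ProbabilityTheory.tendsto_cdf_atTop μ).eventually (lt_mem_nhds hu.2)
    obtain ⟨x, hx⟩ := this.exists
    exact ⟨x, hx.le⟩
  have hbdd : BddBelow {x : ℝ | u ≤ ProbabilityTheory.cdf μ x} := by
    have := (ProbabilityTheory.tendsto_cdf_atBot μ).eventually (gt_mem_nhds hu.1)
    obtain ⟨x, hx⟩ := this.exists
    refine ⟨x, fun y hy => ?_⟩
    by_contra hlt
    push Not at hlt
    have h1 := hmono hlt.le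
    have h2 : u ≤ ProbabilityTheory.cdf μ y := hy
    linarith
  constructor
  · intro h
    have hc : Tendsto (ProbabilityTheory.cdf μ) (𝓝[>] a) (𝓝 (ProbabilityTheory.cdf μ a)) :=
      ((ProbabilityTheory.cdf μ).right_continuous a).mono_left (nhdsWithin_mono _ Ioi_subset_Ici_self)
    refine ge_of_tendsto hc ?_
    filter_upwards [self_mem_nhdsWithin] with x hx
    obtain ⟨y, hy, hyx⟩ := exists_lt_of_csInf_lt hne (lt_of_le_of_lt h hx)
    exact le_trans hy (hmono hyx.le)
  · intro h
    exact csInf_le hbdd h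

lemma aux_quantile_mono (μ : Measure ℝ) [IsProbabilityMeasure μ] :
    MonotoneOn (quantile μ) (Ioo (0:ℝ) 1) := by
  intro u hu v hv huv
  rw [aux_quantile_le_iff μ hu]
  exact huv.trans ((aux_quantile_le_iff μ hv _).1 le_rfl)

lemma aux_aem1 (μ : Measure ℝ) [IsProbabilityMeasure μ] :
    AEMeasurable (quantile μ) (volume.restrict (Ioo (0:ℝ) 1)) :=
  aemeasurable_restrict_of_monotoneOn measurableSet_Ioo (aux_quantile_mono μ)

lemma aux_aem2 (μ : Measure ℝ) [IsProbabilityMeasure μ] :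
    AEMeasurable (fun u => quantile μ (1 - u)) (volume.restrict (Ioo (0:ℝ) 1)) := by
  refine aemeasurable_restrict_of_antitoneOn measurableSet_Ioo ?_
  intro u hu v hv huv
  exact aux_quantile_mono μ ⟨by linarith [hv.2], by linarith [hv.1]⟩
    ⟨by linarith [hu.2], by linarith [hu.1]⟩ (by linarith)

lemma aux_cdf_mem (μ : Measure ℝ) [IsProbabilityMeasure μ] (x : ℝ) :
    0 ≤ cdf μ x ∧ cdf μ x ≤ 1 := by
  rw [aux_cdf_eq]
  exact ⟨ProbabilityTheory.cdf_nonneg μ x, ProbabilityTheory.cdf_le_one μ x⟩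

lemma aux_ofReal_cdf (μ : Measure ℝ) [IsProbabilityMeasure μ] (x : ℝ) :
    ENNReal.ofReal (cdf μ x) = μ (Iic x) := by
  rw [aux_cdf_eq]; exact ProbabilityTheory.ofReal_cdf μ x

lemma aux_map1 (μ : Measure ℝ) [IsProbabilityMeasure μ] :
    (volume.restrict (Ioo (0:ℝ) 1)).map (quantile μ) = μ := by
  symm
  refine Measure.ext_of_Iic _ _ fun a => ?_
  rw [Measure.map_apply_of_aemeasurable (aux_aem1 μ) measurableSet_Iic,
    Measure.restrict_apply' measurableSet_Ioo, ← aux_ofReal_cdf]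
  obtain ⟨h0, h1⟩ := aux_cdf_mem μ a
  apply le_antisymm
  · calc ENNReal.ofReal (cdf μ a) = volume (Ioo 0 (cdf μ a)) := by simp
      _ ≤ _ := measure_mono fun u hu => by
        have : u ∈ Ioo (0:ℝ) 1 := ⟨hu.1, hu.2.trans_le h1⟩
        exact ⟨(aux_quantile_le_iff μ this a).2 hu.2.le, this⟩
  · calc _ ≤ volume (Ioc 0 (cdf μ a)) := measure_mono fun u hu => 
          ⟨hu.2.1, (aux_quantile_le_iff μ hu.2 a).1 hu.1⟩
      _ = _ := by simp

lemma aux_map2 (μ : Measure ℝ) [IsProbabilityMeasure μ] :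
    (volume.restrict (Ioo (0:ℝ) 1)).map (fun u => quantile μ (1 - u)) = μ := by
  symm
  refine Measure.ext_of_Iic _ _ fun a => ?_
  rw [Measure.map_apply_of_aemeasurable (aux_aem2 μ) measurableSet_Iic,
    Measure.restrict_apply' measurableSet_Ioo, ← aux_ofReal_cdf]
  obtain ⟨h0, h1⟩ := aux_cdf_mem μ a
  apply le_antisymm
  · calc ENNReal.ofReal (cdf μ a) = volume (Ioo (1 - cdf μ a) 1) := by simp
      _ ≤ _ := measure_mono fun u hu => by
        have h3 : u ∈ Ioo (0:ℝ) 1 := ⟨by linarith [hu.1], hu.2⟩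
        have h4 : 1 - u ∈ Ioo (0:ℝ) 1 := ⟨by linarith [hu.2], by linarith [h3.1]⟩
        exact ⟨(aux_quantile_le_iff μ h4 a).2 (by linarith [hu.1]), h3⟩
  · calc _ ≤ volume (Ico (1 - cdf μ a) 1) := measure_mono fun u hu => by
          have h4 : 1 - u ∈ Ioo (0:ℝ) 1 := ⟨by linarith [hu.2.2], by linarith [hu.2.1]⟩
          have := (aux_quantile_le_iff μ h4 a).1 hu.1
          exact ⟨by linarith, hu.2.2⟩
      _ = _ := by simp

lemma aux_anti_mem (μ ν : Measure ℝ) [IsProbabilityMeasure μ] [IsProbabilityMeasure ν] :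
    anticomonotone μ ν ∈ Couplings μ ν := by
  have h := (aux_aem1 μ).prodMk (aux_aem2 ν)
  constructor
  · unfold anticomonotone
    rw [AEMeasurable.map_map_of_aemeasurable measurable_fst.aemeasurable h]
    exact aux_map1 μ
  · unfold anticomonotone
    rw [AEMeasurable.map_map_of_aemeasurable measurable_snd.aemeasurable h]
    exact aux_map2 ν

lemma aux_coupling_prob {μ ν : Measure ℝ} [IsProbabilityMeasure μ] {π : Measure (ℝ × ℝ)}
    (hπ : π ∈ Couplings μ ν) : IsProbabilityMeasure π := by
  constructor
  have h : (π.map Prod.fst) univ = 1 := by rw [hπ.1]; simp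
  rwa [Measure.map_apply measurable_fst MeasurableSet.univ, preimage_univ] at h

lemma aux_fst {μ ν : Measure ℝ} {π : Measure (ℝ × ℝ)} (hπ : π ∈ Couplings μ ν) {s : Set ℝ}
    (hs : MeasurableSet s) : π (Prod.fst ⁻¹' s) = μ s := by
  rw [← hπ.1, Measure.map_apply measurable_fst hs]

lemma aux_snd {μ ν : Measure ℝ} {π : Measure (ℝ × ℝ)} (hπ : π ∈ Couplings μ ν) {s : Set ℝ}
    (hs : MeasurableSet s) : π (Prod.snd ⁻¹' s) = ν s := by
  rw [← hπ.2, Measure.map_apply measurable_snd hs]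

/-- If two preimages are nested on `(0,1)`, the anticomonotone coupling maximizes the mass of
the rectangle. -/
lemma aux_nested {μ ν : Measure ℝ} [IsProbabilityMeasure μ] [IsProbabilityMeasure ν]
    {π : Measure (ℝ × ℝ)} (hπ : π ∈ Couplings μ ν) {s t : Set ℝ}
    (hs : MeasurableSet s) (ht : MeasurableSet t)
    (h : (∀ u ∈ Ioo (0:ℝ) 1, quantile μ u ∈ s → quantile ν (1 - u) ∈ t) ∨
      (∀ u ∈ Ioo (0:ℝ) 1, quantile ν (1 - u) ∈ t → quantile μ u ∈ s)) :
    π (Prod.fst ⁻¹' s ∩ Prod.snd ⁻¹' t) ≤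
      anticomonotone μ ν (Prod.fst ⁻¹' s ∩ Prod.snd ⁻¹' t) := by
  have ha := aux_anti_mem μ ν
  have hm := (aux_aem1 μ).prodMk (aux_aem2 ν)
  have hms : MeasurableSet (Prod.fst ⁻¹' s : Set (ℝ × ℝ)) := measurable_fst hs
  have hmt : MeasurableSet (Prod.snd ⁻¹' t : Set (ℝ × ℝ)) := measurable_snd ht
  rcases h with h | h
  · calc _ ≤ π (Prod.fst ⁻¹' s) := measure_mono inter_subset_left
      _ = anticomonotone μ ν (Prod.fst ⁻¹' s) := by rw [aux_fst hπ hs, aux_fst ha hs]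
      _ ≤ _ := by
        unfold anticomonotone
        rw [Measure.map_apply_of_aemeasurable hm hms,
          Measure.map_apply_of_aemeasurable hm (hms.inter hmt),
          Measure.restrict_apply' measurableSet_Ioo, Measure.restrict_apply' measurableSet_Ioo]
        exact measure_mono fun u hu => ⟨⟨hu.1, h u hu.2 hu.1⟩, hu.2⟩
  · calc _ ≤ π (Prod.snd ⁻¹' t) := measure_mono inter_subset_right
      _ = anticomonotone μ ν (Prod.snd ⁻¹' t) := by rw [aux_snd hπ ht, aux_snd ha ht]
      _ ≤ _ := by
        unfold anticomonotone
        rw [Measure.map_apply_of_aemeasurable hm hmt,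
          Measure.map_apply_of_aemeasurable hm (hms.inter hmt),
          Measure.restrict_apply' measurableSet_Ioo, Measure.restrict_apply' measurableSet_Ioo]
        exact measure_mono fun u hu => ⟨⟨h u hu.2 hu.1, hu.1⟩, hu.2⟩

lemma aux_one_sub_mem {u : ℝ} (hu : u ∈ Ioo (0:ℝ) 1) : 1 - u ∈ Ioo (0:ℝ) 1 :=
  ⟨by linarith [hu.2], by linarith [hu.1]⟩

lemma aux_rect1 {μ ν : Measure ℝ} [IsProbabilityMeasure μ] [IsProbabilityMeasure ν]
    {π : Measure (ℝ × ℝ)} (hπ : π ∈ Couplings μ ν) (a b : ℝ) :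
    π (Prod.fst ⁻¹' Iic a ∩ Prod.snd ⁻¹' Ioi b) ≤
      anticomonotone μ ν (Prod.fst ⁻¹' Iic a ∩ Prod.snd ⁻¹' Ioi b) := by
  apply aux_nested hπ measurableSet_Iic measurableSet_Ioi
  simp only [mem_Iic, mem_Ioi]
  rcases lt_or_ge (cdf μ a) (1 - cdf ν b) with h | h
  · left
    intro u hu h1
    rw [aux_quantile_le_iff μ hu] at h1
    rw [← not_le, aux_quantile_le_iff ν (aux_one_sub_mem hu)]
    linarith
  · right
    intro u hu h1
    rw [← not_le, aux_quantile_le_iff ν (aux_one_sub_mem hu)] at h1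
    rw [aux_quantile_le_iff μ hu]
    linarith

lemma aux_rect2 {μ ν : Measure ℝ} [IsProbabilityMeasure μ] [IsProbabilityMeasure ν]
    {π : Measure (ℝ × ℝ)} (hπ : π ∈ Couplings μ ν) (a b : ℝ) :
    π (Prod.fst ⁻¹' Ioi a ∩ Prod.snd ⁻¹' Iic b) ≤
      anticomonotone μ ν (Prod.fst ⁻¹' Ioi a ∩ Prod.snd ⁻¹' Iic b) := by
  apply aux_nested hπ measurableSet_Ioi measurableSet_Iic
  simp only [mem_Iic, mem_Ioi]
  rcases le_or_gt (1 - cdf ν b) (cdf μ a) with h | h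
  · left
    intro u hu h1
    rw [← not_le, aux_quantile_le_iff μ hu] at h1
    rw [aux_quantile_le_iff ν (aux_one_sub_mem hu)]
    linarith
  · right
    intro u hu h1
    rw [aux_quantile_le_iff ν (aux_one_sub_mem hu)] at h1
    rw [← not_le, aux_quantile_le_iff μ hu]
    linarith

/-- The hinge kernel. -/
def auxK (t z : ℝ) : ℝ≥0∞ := if 0 < t then ENNReal.ofReal (z - t) else ENNReal.ofReal (t - z)

lemma aux_hinge1 (π : Measure (ℝ × ℝ)) [IsProbabilityMeasure π] (t : ℝ) :
    ∫⁻ z, ENNReal.ofReal (z.2 - z.1 - t) ∂π =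
      ∫⁻ s, π (Prod.fst ⁻¹' Iic (s - t) ∩ Prod.snd ⁻¹' Ioi s) := by
  have hE : MeasurableSet {p : (ℝ × ℝ) × ℝ | p.1.1 + t ≤ p.2 ∧ p.2 < p.1.2} := by
    simp only [ofPred_and]
    exact (measurableSet_le (by fun_prop) (by fun_prop)).inter
      (measurableSet_lt (by fun_prop) (by fun_prop))
  have h1 : ∀ z : ℝ × ℝ, ENNReal.ofReal (z.2 - z.1 - t) =
      ∫⁻ s : ℝ, {p : (ℝ × ℝ) × ℝ | p.1.1 + t ≤ p.2 ∧ p.2 < p.1.2}.indicator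
        (fun _ => (1:ℝ≥0∞)) (z, s) := by
    intro z
    have : (fun s : ℝ => {p : (ℝ × ℝ) × ℝ | p.1.1 + t ≤ p.2 ∧ p.2 < p.1.2}.indicator
        (fun _ => (1:ℝ≥0∞)) (z, s)) = (Ico (z.1 + t) z.2).indicator 1 := by
      ext s; simp [indicator]
    rw [this, lintegral_indicator_one measurableSet_Ico, Real.volume_Ico]
    congr 1; ring
  simp_rw [h1]
  rw [lintegral_lintegral_swap]
  · refine lintegral_congr fun s => ?_
    have : (fun z : ℝ × ℝ => {p : (ℝ × ℝ) × ℝ | p.1.1 + t ≤ p.2 ∧ p.2 < p.1.2}.indicator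
        (fun _ => (1:ℝ≥0∞)) (z, s)) =
        (Prod.fst ⁻¹' Iic (s - t) ∩ Prod.snd ⁻¹' Ioi s).indicator 1 := by
      ext z; simp [indicator, le_sub_iff_add_le]
    rw [this, lintegral_indicator_one]
    exact (measurable_fst measurableSet_Iic).inter (measurable_snd measurableSet_Ioi)
  · exact (measurable_const.indicator hE).aemeasurable

lemma aux_hinge2 (π : Measure (ℝ × ℝ)) [IsProbabilityMeasure π] (t : ℝ) :
    ∫⁻ z, ENNReal.ofReal (t - (z.2 - z.1)) ∂π =
      ∫⁻ s, π (Prod.fst ⁻¹' Ioi (s - t) ∩ Prod.snd ⁻¹' Iic s) := by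
  have hE : MeasurableSet {p : (ℝ × ℝ) × ℝ | p.1.2 ≤ p.2 ∧ p.2 < p.1.1 + t} := by
    simp only [ofPred_and]
    exact (measurableSet_le (by fun_prop) (by fun_prop)).inter
      (measurableSet_lt (by fun_prop) (by fun_prop))
  have h1 : ∀ z : ℝ × ℝ, ENNReal.ofReal (t - (z.2 - z.1)) =
      ∫⁻ s : ℝ, {p : (ℝ × ℝ) × ℝ | p.1.2 ≤ p.2 ∧ p.2 < p.1.1 + t}.indicator
        (fun _ => (1:ℝ≥0∞)) (z, s) := by
    intro z
    have : (fun s : ℝ => {p : (ℝ × ℝ) × ℝ | p.1.2 ≤ p.2 ∧ p.2 < p.1.1 + t}.indicator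
        (fun _ => (1:ℝ≥0∞)) (z, s)) = (Ico z.2 (z.1 + t)).indicator 1 := by
      ext s; simp [indicator]
    rw [this, lintegral_indicator_one measurableSet_Ico, Real.volume_Ico]
    congr 1; ring
  simp_rw [h1]
  rw [lintegral_lintegral_swap]
  · refine lintegral_congr fun s => ?_
    have : (fun z : ℝ × ℝ => {p : (ℝ × ℝ) × ℝ | p.1.2 ≤ p.2 ∧ p.2 < p.1.1 + t}.indicator
        (fun _ => (1:ℝ≥0∞)) (z, s)) =
        (Prod.fst ⁻¹' Ioi (s - t) ∩ Prod.snd ⁻¹' Iic s).indicator 1 := by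
      ext z; simp [indicator, sub_lt_iff_lt_add, and_comm]
    rw [this, lintegral_indicator_one]
    exact (measurable_fst measurableSet_Ioi).inter (measurable_snd measurableSet_Iic)
  · exact (measurable_const.indicator hE).aemeasurable

lemma aux_hinge_le {μ ν : Measure ℝ} [IsProbabilityMeasure μ] [IsProbabilityMeasure ν]
    {π : Measure (ℝ × ℝ)} (hπ : π ∈ Couplings μ ν) (t : ℝ) :
    ∫⁻ z, auxK t (z.2 - z.1) ∂π ≤ ∫⁻ z, auxK t (z.2 - z.1) ∂(anticomonotone μ ν) := by
  have := aux_coupling_prob hπ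
  have := aux_coupling_prob (aux_anti_mem μ ν)
  unfold auxK
  split_ifs with ht
  · rw [aux_hinge1, aux_hinge1]
    exact lintegral_mono fun s => aux_rect1 hπ _ _
  · rw [aux_hinge2, aux_hinge2]
    exact lintegral_mono fun s => aux_rect2 hπ _ _

lemma aux_K_meas : Measurable (Function.uncurry auxK) := by
  unfold auxK Function.uncurry
  refine Measurable.ite ?_ ?_ ?_
  · exact measurableSet_lt measurable_const measurable_fst
  · fun_prop
  · fun_prop

lemma aux_mix_le {μ ν : Measure ℝ} [IsProbabilityMeasure μ] [IsProbabilityMeasure ν]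
    {π : Measure (ℝ × ℝ)} (hπ : π ∈ Couplings μ ν) (m : Measure ℝ) [SFinite m] :
    ∫⁻ z, ∫⁻ t, auxK t (z.2 - z.1) ∂m ∂π ≤
      ∫⁻ z, ∫⁻ t, auxK t (z.2 - z.1) ∂m ∂(anticomonotone μ ν) := by
  have := aux_coupling_prob hπ
  have := aux_coupling_prob (aux_anti_mem μ ν)
  have hm : Measurable (Function.uncurry fun (z : ℝ × ℝ) (t : ℝ) => auxK t (z.2 - z.1)) :=
    aux_K_meas.comp (f := fun p : (ℝ × ℝ) × ℝ => (p.2, p.1.2 - p.1.1)) (by fun_prop)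
  rw [lintegral_lintegral_swap hm.aemeasurable, lintegral_lintegral_swap hm.aemeasurable]
  exact lintegral_mono fun t => aux_hinge_le hπ t

/-- Convex functions are mixtures of hinges up to an affine function. -/
lemma aux_convex_repr (θ : ℝ → ℝ) (hθ : ConvexOn ℝ Set.univ θ) :
    ∃ (m : Measure ℝ) (_ : SFinite m) (c : ℝ), ∀ z, 0 ≤ θ z - θ 0 - c * z ∧
      ENNReal.ofReal (θ z - θ 0 - c * z) = ∫⁻ t, auxK t z ∂m := by
  set R : ℝ → ℝ := fun x => derivWithin θ (Ioi x) x with hR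
  have hmono : Monotone R := by
    have := hθ.monotoneOn_rightDeriv
    rw [interior_univ] at this
    exact monotoneOn_univ.1 this
  set S := hmono.stieltjesFunction with hS
  have hae : ∀ᵐ x : ℝ, R x = S x := by
    have h1 := hmono.countable_not_continuousAt.ae_notMem (volume : Measure ℝ)
    filter_upwards [h1] with x hx
    have hx' : ContinuousAt R x := by simpa using hx
    rw [hS, hmono.stieltjesFunction_eq]
    have hw : ContinuousWithinAt R (Ioi x) x := hx'.continuousWithinAt
    exact (hmono.continuousWithinAt_Ioi_iff_rightLim_eq.1 hw).symm
  have hcont : Continuous θ := by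
    have := hθ.continuousOn isOpen_univ
    exact continuousOn_univ.1 this
  have hSi : ∀ a b, IntervalIntegrable S volume a b := fun a b => S.mono.intervalIntegrable
  have hFTC : ∀ a b, ∫ s in a..b, S s = θ b - θ a := by
    intro a b
    rw [← intervalIntegral.integral_eq_sub_of_hasDeriv_right (f := θ) (f' := R)
      hcont.continuousOn ?_ hmono.intervalIntegrable]
    · apply intervalIntegral.integral_congr_ae
      filter_upwards [hae] with x hx _ using hx.symm
    · intro x _
      exact hθ.hasDerivWithinAt_rightDeriv_of_mem_interior (by simp)
  refine ⟨S.measure, inferInstance, S 0, fun z => ?_⟩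
  rcases le_total 0 z with hz | hz
  · have h1 : θ z - θ 0 - S 0 * z = ∫ s in Ioo 0 z, (S s - S 0) := by
      rw [← integral_Ioc_eq_integral_Ioo, ← intervalIntegral.integral_of_le hz,
        intervalIntegral.integral_sub (hSi _ _) (by simp), hFTC]
      simp; ring
    have hnn : ∀ s ∈ Ioo 0 z, 0 ≤ S s - S 0 := fun s hs => sub_nonneg.2 (S.mono hs.1.le)
    refine ⟨h1 ▸ setIntegral_nonneg measurableSet_Ioo hnn, ?_⟩
    rw [h1, ofReal_integral_eq_lintegral_ofReal]
    rotate_left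
    · have := ((hSi 0 z).sub (intervalIntegrable_const (c := S 0))).1
      exact this.mono_set Ioo_subset_Ioc_self
    · exact (ae_restrict_iff' measurableSet_Ioo).2 (ae_of_all _ hnn)
    have hE : MeasurableSet {p : ℝ × ℝ | 0 < p.2 ∧ p.2 ≤ p.1 ∧ p.1 < z} := by
      simp only [ofPred_and]
      exact (measurableSet_lt (by fun_prop) (by fun_prop)).inter
        ((measurableSet_le (by fun_prop) (by fun_prop)).inter
          (measurableSet_lt (by fun_prop) (by fun_prop)))
    calc _ = ∫⁻ s, ∫⁻ t, {p : ℝ × ℝ | 0 < p.2 ∧ p.2 ≤ p.1 ∧ p.1 < z}.indicator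
              (fun _ => (1:ℝ≥0∞)) (s, t) ∂S.measure := by
          rw [← lintegral_indicator measurableSet_Ioo]
          refine lintegral_congr fun s => ?_
          by_cases hs : s ∈ Ioo 0 z
          · rw [indicator_of_mem hs, ← S.measure_Ioc, ← lintegral_indicator_one measurableSet_Ioc]
            refine lintegral_congr fun t => ?_
            simp [indicator, hs.2]
          · rw [indicator_of_notMem hs]
            symm
            rw [lintegral_eq_zero_iff' (by
              exact ((measurable_const.indicator hE).comp measurable_prodMk_left).aemeasurable)]
            refine ae_of_all _ fun t => ?_
            apply indicator_of_notMem
            rintro ⟨ha, hb, hc⟩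
            exact hs ⟨ha.trans_le hb, hc⟩
      _ = ∫⁻ t, ∫⁻ s, {p : ℝ × ℝ | 0 < p.2 ∧ p.2 ≤ p.1 ∧ p.1 < z}.indicator
              (fun _ => (1:ℝ≥0∞)) (s, t) ∂volume ∂S.measure :=
          lintegral_lintegral_swap (measurable_const.indicator hE).aemeasurable
      _ = _ := by
          refine lintegral_congr fun t => ?_
          unfold auxK
          split_ifs with ht
          · rw [← Real.volume_Ico, ← lintegral_indicator_one measurableSet_Ico]
            refine lintegral_congr fun s => ?_
            simp [indicator, ht]
          · rw [ENNReal.ofReal_of_nonpos (by linarith)]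
            simp [indicator, ht]
  · have h1 : θ z - θ 0 - S 0 * z = ∫ s in Ioo z 0, (S 0 - S s) := by
      rw [← integral_Ioc_eq_integral_Ioo, ← intervalIntegral.integral_of_le hz,
        intervalIntegral.integral_sub (by simp) (hSi _ _), hFTC]
      simp; ring
    have hnn : ∀ s ∈ Ioo z 0, 0 ≤ S 0 - S s := fun s hs => sub_nonneg.2 (S.mono hs.2.le)
    refine ⟨h1 ▸ setIntegral_nonneg measurableSet_Ioo hnn, ?_⟩
    rw [h1, ofReal_integral_eq_lintegral_ofReal]
    rotate_left
    · have := ((intervalIntegrable_const (c := S 0)).sub (hSi z 0)).1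
      exact this.mono_set Ioo_subset_Ioc_self
    · exact (ae_restrict_iff' measurableSet_Ioo).2 (ae_of_all _ hnn)
    have hE : MeasurableSet {p : ℝ × ℝ | p.2 ≤ 0 ∧ z < p.1 ∧ p.1 < p.2} := by
      simp only [ofPred_and]
      exact (measurableSet_le (by fun_prop) (by fun_prop)).inter
        ((measurableSet_lt (by fun_prop) (by fun_prop)).inter
          (measurableSet_lt (by fun_prop) (by fun_prop)))
    calc _ = ∫⁻ s, ∫⁻ t, {p : ℝ × ℝ | p.2 ≤ 0 ∧ z < p.1 ∧ p.1 < p.2}.indicator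
              (fun _ => (1:ℝ≥0∞)) (s, t) ∂S.measure := by
          rw [← lintegral_indicator measurableSet_Ioo]
          refine lintegral_congr fun s => ?_
          by_cases hs : s ∈ Ioo z 0
          · rw [indicator_of_mem hs, ← S.measure_Ioc, ← lintegral_indicator_one measurableSet_Ioc]
            refine lintegral_congr fun t => ?_
            simp [indicator, hs.1, and_comm]
          · rw [indicator_of_notMem hs]
            symm
            rw [lintegral_eq_zero_iff' (by
              exact ((measurable_const.indicator hE).comp measurable_prodMk_left).aemeasurable)]
            refine ae_of_all _ fun t => ?_
            apply indicator_of_notMem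
            rintro ⟨ha, hb, hc⟩
            exact hs ⟨hb, hc.trans_le ha⟩
      _ = ∫⁻ t, ∫⁻ s, {p : ℝ × ℝ | p.2 ≤ 0 ∧ z < p.1 ∧ p.1 < p.2}.indicator
              (fun _ => (1:ℝ≥0∞)) (s, t) ∂volume ∂S.measure :=
          lintegral_lintegral_swap (measurable_const.indicator hE).aemeasurable
      _ = _ := by
          refine lintegral_congr fun t => ?_
          unfold auxK
          split_ifs with ht
          · rw [ENNReal.ofReal_of_nonpos (by linarith)]
            simp [indicator, not_le.2 ht]
          · rw [← Real.volume_Ioo, ← lintegral_indicator_one measurableSet_Ioo]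
            refine lintegral_congr fun s => ?_
            simp [indicator, not_lt.1 ht]

lemma aux_finmom {μ : Measure ℝ} (hμ : FinMom 1 (0 : ℝ) μ) : Integrable (fun x : ℝ => x) μ := by
  refine ⟨measurable_id.aestronglyMeasurable, ?_⟩
  rw [hasFiniteIntegral_iff_norm]
  unfold FinMom at hμ
  simpa using hμ

/-- the anticomonotone coupling maximizes `∫ θ(y-x) dπ` over couplings,
for convex `θ`. -/
theorem statement18 (μ ν : Measure ℝ) [IsProbabilityMeasure μ] [IsProbabilityMeasure ν]
    (hμ : FinMom 1 (0 : ℝ) μ) (hν : FinMom 1 (0 : ℝ) ν)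
    (θ : ℝ → ℝ) (hθ : ConvexOn ℝ Set.univ θ)
    (f g : ℝ → ℝ) (hf : Integrable f μ) (hg : Integrable g ν)
    (hdom : ∀ x y : ℝ, |θ (y - x)| ≤ f x + g y) :
    ∫ z : ℝ × ℝ, θ (z.2 - z.1) ∂(anticomonotone μ ν)
      = sSup {v : ℝ | ∃ π ∈ Couplings μ ν, v = ∫ z : ℝ × ℝ, θ (z.2 - z.1) ∂π} := by
  obtain ⟨m, _, c, hrep⟩ := aux_convex_repr θ hθ
  have hcont : Continuous θ := continuousOn_univ.1 (hθ.continuousOn isOpen_univ)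
  have hfst : ∀ π ∈ Couplings μ ν, ∀ k : ℝ → ℝ, Integrable k μ →
      Integrable (fun z : ℝ × ℝ => k z.1) π := by
    intro π hπ k hk
    rw [← hπ.1] at hk
    exact hk.comp_measurable measurable_fst
  have hsnd : ∀ π ∈ Couplings μ ν, ∀ k : ℝ → ℝ, Integrable k ν →
      Integrable (fun z : ℝ × ℝ => k z.2) π := by
    intro π hπ k hk
    rw [← hπ.2] at hk
    exact hk.comp_measurable measurable_snd
  have hθi : ∀ π ∈ Couplings μ ν, Integrable (fun z : ℝ × ℝ => θ (z.2 - z.1)) π := by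
    intro π hπ
    refine ((hfst π hπ f hf).add (hsnd π hπ g hg)).mono'
      (by fun_prop) (ae_of_all _ fun z => ?_)
    exact hdom z.1 z.2
  have hlin : ∀ π ∈ Couplings μ ν, Integrable (fun z : ℝ × ℝ => z.2 - z.1) π ∧
      ∫ z : ℝ × ℝ, (z.2 - z.1) ∂π = ∫ y, y ∂ν - ∫ x, x ∂μ := by
    intro π hπ
    have h1 := hfst π hπ _ (aux_finmom hμ)
    have h2 := hsnd π hπ _ (aux_finmom hν)
    refine ⟨h2.sub h1, ?_⟩
    rw [integral_sub h2 h1]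
    congr 1
    · rw [← hπ.2, integral_map measurable_snd.aemeasurable (by fun_prop)]
    · rw [← hπ.1, integral_map measurable_fst.aemeasurable (by fun_prop)]
  have hval : ∀ π ∈ Couplings μ ν,
      Integrable (fun z : ℝ × ℝ => θ (z.2 - z.1) - θ 0 - c * (z.2 - z.1)) π ∧
      ∫ z : ℝ × ℝ, θ (z.2 - z.1) ∂π = θ 0 + c * (∫ y, y ∂ν - ∫ x, x ∂μ) +
        ∫ z : ℝ × ℝ, (θ (z.2 - z.1) - θ 0 - c * (z.2 - z.1)) ∂π := by
    intro π hπ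
    have := aux_coupling_prob hπ
    obtain ⟨h1, h2⟩ := hlin π hπ
    have h3 : Integrable (fun z : ℝ × ℝ => θ (z.2 - z.1) - θ 0) π :=
      (hθi π hπ).sub (integrable_const _)
    refine ⟨h3.sub (h1.const_mul c), ?_⟩
    rw [integral_sub h3 (h1.const_mul c), integral_sub (hθi π hπ) (integrable_const _),
      integral_const_mul, h2]
    simp
  have ha := aux_anti_mem μ ν
  symm
  apply IsGreatest.csSup_eq
  refine ⟨⟨_, ha, rfl⟩, ?_⟩
  rintro v ⟨π, hπ, rfl⟩
  obtain ⟨hi1, hv1⟩ := hval π hπ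
  obtain ⟨hi2, hv2⟩ := hval _ ha
  rw [hv1, hv2]
  have hle : ∫ z : ℝ × ℝ, (θ (z.2 - z.1) - θ 0 - c * (z.2 - z.1)) ∂π ≤
      ∫ z : ℝ × ℝ, (θ (z.2 - z.1) - θ 0 - c * (z.2 - z.1)) ∂(anticomonotone μ ν) := by
    have hnn2 : 0 ≤ ∫ z : ℝ × ℝ, (θ (z.2 - z.1) - θ 0 - c * (z.2 - z.1)) ∂(anticomonotone μ ν) :=
      integral_nonneg fun z => (hrep _).1
    rw [← ENNReal.ofReal_le_ofReal_iff hnn2,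
      ofReal_integral_eq_lintegral_ofReal hi1 (ae_of_all _ fun z => (hrep _).1),
      ofReal_integral_eq_lintegral_ofReal hi2 (ae_of_all _ fun z => (hrep _).1)]
    simp_rw [fun z => (hrep z).2]
    exact aux_mix_le hπ m
  linarith
end
end
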